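/- arXiv:2206.14758 — 3 statements merged into one kernel-verified Lean document; each statement's English description precedes it below -/
import Mathlib

section
/- Suppose Φ : 𝔻ⁿ → 𝔻ⁿ is holomorphic and C¹-smooth on the closed polydisc, and satisfies the rank condition (†): for every nonempty subset I ⊆ {1,…,n} of cardinality q and every ζ ∈ 𝕋ⁿ with Φ_I(ζ) ∈ 𝕋^q, the complex derivative d_ζΦ_I has rank q. Then there exists a constant C > 0 such that for every β ∈ (-1, 0) and every holomorphic f : 𝔻ⁿ → ℂ: ∫_{𝔻ⁿ} |f∘Φ|² dV_β ≤ C·∫_{𝔻ⁿ} |f|² dV_β (i.e., the composition operator C_Φ is bounded on A²_β(𝔻ⁿ) with norm bounded uniformly in β ∈ (-1,0)). -/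
open MeasureTheory Metric Set ENNReal

noncomputable section

/-- The open unit polydisc in `ℂⁿ`. -/
def polydisc (n : ℕ) : Set (Fin n → ℂ) := {z | ∀ j, ‖z j‖ < 1}

/-- The closed unit polydisc in `ℂⁿ`. -/
def closedPolydisc (n : ℕ) : Set (Fin n → ℂ) := {z | ∀ j, ‖z j‖ ≤ 1}

/-- The distinguished boundary (torus) of the polydisc. -/
def torus (n : ℕ) : Set (Fin n → ℂ) := {z | ∀ j, ‖z j‖ = 1}

/-- The weighted Bergman measure `V_β` on the polydisc: the product of the measures
`dA_β(z) = (β+1)(1-|z|²)^β dA(z)`, where `dA` is normalized area measure on the unit disc. -/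
def Vbeta (n : ℕ) (β : ℝ) : Measure (Fin n → ℂ) :=
  (volume.restrict (polydisc n)).withDensity
    (fun z => ENNReal.ofReal (∏ j, ((β + 1) * (1 - ‖z j‖ ^ 2) ^ β / Real.pi)))

/-- The `(i,j)` entry `∂Φ_i/∂z_j(ζ)` of the complex Jacobian matrix of `Φ` at `ζ`
(computed via the derivative of the extension to the closed polydisc). -/
def jacEntry (n : ℕ) (Φ : (Fin n → ℂ) → (Fin n → ℂ)) (ζ : Fin n → ℂ) (i j : Fin n) : ℂ :=
  fderivWithin ℝ Φ (closedPolydisc n) ζ (Pi.single j 1) i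

/-- The rank condition (†): for every nonempty `I ⊆ {1,…,n}` of cardinality `q` and
every `ζ ∈ 𝕋ⁿ` with `Φ_I(ζ) ∈ 𝕋^q`, the Jacobian `d_ζΦ_I` has rank `q`. -/
def rankCond (n : ℕ) (Φ : (Fin n → ℂ) → (Fin n → ℂ)) : Prop :=
  ∀ I : Finset (Fin n), I.Nonempty → ∀ ζ ∈ torus n, (∀ i ∈ I, ‖Φ ζ i‖ = 1) →
    Matrix.rank (Matrix.of fun (i : I) (j : Fin n) => jacEntry n Φ ζ i j) = I.card

lemma cs_sq {α : Type*} [MeasurableSpace α] (ν : Measure α) {f g : α → ℝ≥0∞}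
    (hf : Measurable f) (hg : Measurable g) :
    (∫⁻ x, f x * g x ∂ν) ^ 2 ≤ (∫⁻ x, f x ^ 2 ∂ν) * ∫⁻ x, g x ^ 2 ∂ν := by
  have h := ENNReal.lintegral_mul_le_Lp_mul_Lq ν (p := 2) (q := 2)
    Real.HolderConjugate.two_two hf.aemeasurable hg.aemeasurable
  have h2 := pow_le_pow_left₀ zero_le h 2
  refine le_trans (by simpa using h2) (le_of_eq ?_)
  rw [mul_pow, ← ENNReal.rpow_natCast, ← ENNReal.rpow_natCast, ← ENNReal.rpow_mul,
    ← ENNReal.rpow_mul]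
  norm_num

/-- averaging operator -/
def Av {α : Type*} [MeasurableSpace α] (ν : Measure α) (κ : ℕ → α → α → ℝ≥0∞) (k : ℕ)
    (f : α → ℝ≥0∞) (x : α) : ℝ≥0∞ := ∫⁻ y, κ k x y * f y ∂ν

/-- finite-scale maximal operator -/
def Mx {α : Type*} [MeasurableSpace α] (ν : Measure α) (κ : ℕ → α → α → ℝ≥0∞) (K : ℕ)
    (f : α → ℝ≥0∞) (x : α) : ℝ≥0∞ := (Finset.range K).sup fun k => Av ν κ k f x

section maximal
variable {α : Type*} [MeasurableSpace α] {ν : Measure α} [IsFiniteMeasure ν]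
  {κ : ℕ → α → α → ℝ≥0∞}

lemma meas_Av (hm : ∀ k, Measurable (Function.uncurry (κ k))) (k : ℕ) {f : α → ℝ≥0∞}
    (hf : Measurable f) : Measurable (Av ν κ k f) := by
  unfold Av
  apply Measurable.lintegral_prod_right'
    (f := fun p : α × α => κ k p.1 p.2 * f p.2)
  exact (hm k).mul (hf.comp measurable_snd)

lemma meas_Mx (hm : ∀ k, Measurable (Function.uncurry (κ k))) (K : ℕ) {f : α → ℝ≥0∞}
    (hf : Measurable f) : Measurable (Mx ν κ K f) := by
  unfold Mx
  induction K with
  | zero => simp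
  | succ K ih =>
    simp only [Finset.range_add_one, Finset.sup_insert]
    exact (meas_Av hm K hf).sup ih

lemma maximal_apriori
    (hbd : ∀ k, ∃ b : ℝ≥0∞, b ≠ ∞ ∧ ∀ x y, κ k x y ≤ b) (K : ℕ) :
    ∃ a : ℝ≥0∞, a ≠ ∞ ∧ ∀ f : α → ℝ≥0∞, Measurable f →
      ∫⁻ x, Mx ν κ K f x ^ 2 ∂ν ≤ a * ∫⁻ x, f x ^ 2 ∂ν := by
  choose b hb hb' using hbd
  set s := (Finset.range K).sup b with hs
  have hs' : s ≠ ∞ := by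
    rw [← lt_top_iff_ne_top, hs, Finset.sup_lt_iff (by simp)]
    intro k _
    exact (hb k).lt_top
  refine ⟨s ^ 2 * ν univ * ν univ, by finiteness, fun f hf => ?_⟩
  have h1 : ∀ x, Mx ν κ K f x ^ 2 ≤ s ^ 2 * ν univ * ∫⁻ x, f x ^ 2 ∂ν := by
    intro x
    have : Mx ν κ K f x ≤ s * ∫⁻ y, 1 * f y ∂ν := by
      refine Finset.sup_le fun k hk => ?_
      rw [← lintegral_const_mul _ (by fun_prop)]
      refine lintegral_mono fun y => ?_
      simp only [one_mul]
      gcongr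
      exact (hb' k x y).trans (Finset.le_sup (f := b) hk)
    calc Mx ν κ K f x ^ 2 ≤ (s * ∫⁻ y, 1 * f y ∂ν) ^ 2 := by gcongr
      _ = s ^ 2 * (∫⁻ y, 1 * f y ∂ν) ^ 2 := by rw [mul_pow]
      _ ≤ s ^ 2 * ((∫⁻ y, 1 ^ 2 ∂ν) * ∫⁻ y, f y ^ 2 ∂ν) := by
        gcongr
        exact cs_sq ν measurable_const hf
      _ = _ := by simp [mul_assoc]
  calc ∫⁻ x, Mx ν κ K f x ^ 2 ∂ν ≤ ∫⁻ x, s ^ 2 * ν univ * ∫⁻ x, f x ^ 2 ∂ν ∂ν := lintegral_mono h1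
    _ = _ := by rw [lintegral_const]; ring

lemma maximal_step (hm : ∀ k, Measurable (Function.uncurry (κ k)))
    (hsymm : ∀ k x y, κ k x y = κ k y x) (C : ℝ≥0∞)
    (hC : ∀ k l, k ≤ l → ∀ x y, ∫⁻ z, κ k x z * κ l z y ∂ν ≤ C * κ k x y)
    (K : ℕ) {f : α → ℝ≥0∞} (hf : Measurable f) :
    (∫⁻ x, Mx ν κ K f x ^ 2 ∂ν) ^ 2 ≤ (∫⁻ x, f x ^ 2 ∂ν) *
      (2 * C * ∫⁻ x, Mx ν κ K f x * Mx ν κ K (Mx ν κ K f) x ∂ν) := by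
  rcases Nat.eq_zero_or_pos K with rfl | hK
  · simp [Mx]
  set g := Mx ν κ K f with hg
  have hgm : Measurable g := meas_Mx hm K hf
  have hex : ∀ x, ∃ k, k < K ∧ Av ν κ k f x = g x := by
    intro x
    obtain ⟨k, hk, hk'⟩ := Finset.exists_mem_eq_sup (Finset.range K) (by simpa using hK.ne')
      (fun k => Av ν κ k f x)
    exact ⟨k, by simpa using hk, hk'.symm⟩
  classical
  let kf : α → ℕ := fun x => Nat.find (hex x)
  have hkf : Measurable kf := by
    apply measurable_find
    intro k
    by_cases hk : k < K
    · simp only [hk, true_and]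
      exact measurableSet_eq_fun (meas_Av hm k hf) hgm
    · simp [hk]
  have hkK : ∀ x, kf x < K := fun x => (Nat.find_spec (hex x)).1
  have hkg : ∀ x, Av ν κ (kf x) f x = g x := fun x => (Nat.find_spec (hex x)).2
  let κ' : α → α → ℝ≥0∞ := fun x y => κ (kf x) x y
  have hκ' : Measurable (Function.uncurry κ') := by
    have h1 : Measurable (fun p : ℕ × (α × α) => κ p.1 p.2.1 p.2.2) := by
      apply measurable_from_prod_countable_right
      intro k
      exact hm k
    exact h1.comp (f := fun p : α × α => (kf p.1, p)) (by fun_prop)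
  have hκ2 : ∀ {β : Type _} [MeasurableSpace β] {u v : β → α}, Measurable u → Measurable v →
      Measurable (fun b => κ' (u b) (v b)) := fun hu hv => hκ'.comp (hu.prodMk hv)
  let H : α → ℝ≥0∞ := fun y => ∫⁻ x, g x * κ' x y ∂ν
  have hH : Measurable H := by
    apply Measurable.lintegral_prod_right' (f := fun p : α × α => g p.2 * κ' p.2 p.1)
    exact (hgm.comp measurable_snd).mul (hκ2 measurable_snd measurable_fst)
  have e1 : ∫⁻ x, g x ^ 2 ∂ν = ∫⁻ y, f y * H y ∂ν := by
    calc ∫⁻ x, g x ^ 2 ∂ν = ∫⁻ x, ∫⁻ y, g x * (κ' x y * f y) ∂ν ∂ν := by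
          refine lintegral_congr fun x => ?_
          rw [lintegral_const_mul _ (f := fun y => κ' x y * f y) ((hκ2 measurable_const measurable_id).mul hf), sq]
          congr 1
          exact (hkg x).symm
      _ = ∫⁻ y, ∫⁻ x, g x * (κ' x y * f y) ∂ν ∂ν := by
          rw [lintegral_lintegral_swap]
          exact ((hgm.comp measurable_fst).mul ((hκ2 measurable_fst measurable_snd).mul
            (hf.comp measurable_snd))).aemeasurable
      _ = _ := by
          refine lintegral_congr fun y => ?_
          rw [← lintegral_const_mul _ (f := fun x => g x * κ' x y) (hgm.mul (hκ2 measurable_id measurable_const))]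
          refine lintegral_congr fun x => ?_
          ring
  have e2 : ∫⁻ y, H y ^ 2 ∂ν = ∫⁻ x, ∫⁻ x', g x * g x' * ∫⁻ y, κ' x y * κ' x' y ∂ν ∂ν ∂ν := by
    calc ∫⁻ y, H y ^ 2 ∂ν = ∫⁻ y, ∫⁻ x, ∫⁻ x', g x * κ' x y * (g x' * κ' x' y) ∂ν ∂ν ∂ν := by
          refine lintegral_congr fun y => ?_
          rw [sq, ← lintegral_mul_const _ (f := fun x => g x * κ' x y) (hgm.mul (hκ2 measurable_id measurable_const))]
          refine lintegral_congr fun x => ?_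
          rw [lintegral_const_mul _ (f := fun x => g x * κ' x y) (hgm.mul (hκ2 measurable_id measurable_const))]
      _ = ∫⁻ x, ∫⁻ y, ∫⁻ x', g x * κ' x y * (g x' * κ' x' y) ∂ν ∂ν ∂ν := by
          rw [lintegral_lintegral_swap]
          refine (Measurable.lintegral_prod_right' (f := fun p : (α × α) × α =>
            g p.1.2 * κ' p.1.2 p.1.1 * (g p.2 * κ' p.2 p.1.1)) ?_).aemeasurable
          refine ((hgm.comp (by fun_prop)).mul (hκ2 (by fun_prop) (by fun_prop))).mul
            ((hgm.comp (by fun_prop)).mul (hκ2 (by fun_prop) (by fun_prop)))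
      _ = ∫⁻ x, ∫⁻ x', ∫⁻ y, g x * κ' x y * (g x' * κ' x' y) ∂ν ∂ν ∂ν := by
          refine lintegral_congr fun x => ?_
          rw [lintegral_lintegral_swap]
          exact ((measurable_const.mul (hκ2 (by fun_prop) (by fun_prop))).mul
            ((hgm.comp (by fun_prop)).mul (hκ2 (by fun_prop) (by fun_prop)))).aemeasurable
      _ = _ := by
          refine lintegral_congr fun x => lintegral_congr fun x' => ?_
          rw [← lintegral_const_mul _ (f := fun y => κ' x y * κ' x' y) ((hκ2 (by fun_prop) (by fun_prop)).mul
            (hκ2 (by fun_prop) (by fun_prop)))]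
          refine lintegral_congr fun y => ?_
          ring
  have key : ∀ x x', ∫⁻ y, κ' x y * κ' x' y ∂ν ≤ C * κ' x x' + C * κ' x' x := by
    intro x x'
    rcases le_total (kf x) (kf x') with h | h
    · refine le_trans ?_ le_self_add
      refine le_trans (le_of_eq ?_) (hC (kf x) (kf x') h x x')
      refine lintegral_congr fun y => ?_
      simp only [κ']
      rw [hsymm (kf x') x' y]
    · refine le_trans ?_ le_add_self
      refine le_trans (le_of_eq ?_) (hC (kf x') (kf x) h x' x)
      refine lintegral_congr fun y => ?_
      simp only [κ']
      rw [hsymm (kf x) x y, mul_comm]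
  have m1 : Measurable (fun p : α × α => g p.1 * g p.2 * (C * κ' p.1 p.2)) :=
    ((hgm.comp measurable_fst).mul (hgm.comp measurable_snd)).mul
      (measurable_const.mul (hκ2 (by fun_prop) (by fun_prop)))
  have e3 : ∫⁻ y, H y ^ 2 ∂ν ≤ 2 * C * ∫⁻ x, g x * Mx ν κ K g x ∂ν := by
    rw [e2]
    have hA : ∫⁻ x, ∫⁻ x', g x * g x' * (C * κ' x x') ∂ν ∂ν ≤ C * ∫⁻ x, g x * Mx ν κ K g x ∂ν := by
      rw [← lintegral_const_mul _ (f := fun x => g x * Mx ν κ K g x) (hgm.mul (meas_Mx hm K hgm))]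
      refine lintegral_mono fun x => ?_
      calc ∫⁻ x', g x * g x' * (C * κ' x x') ∂ν = ∫⁻ x', (C * g x) * (κ' x x' * g x') ∂ν :=
            lintegral_congr fun x' => by ring
        _ = C * g x * ∫⁻ x', (κ' x x' * g x') ∂ν := by
            rw [lintegral_const_mul _ (f := fun x' => κ' x x' * g x') ((hκ2 measurable_const measurable_id).mul hgm)]
        _ ≤ C * g x * Mx ν κ K g x := by
            gcongr
            exact Finset.le_sup (f := fun k => Av ν κ k g x) (Finset.mem_range.2 (hkK x))
        _ = _ := by ring
    calc _ ≤ ∫⁻ x, ∫⁻ x', (g x * g x' * (C * κ' x x') + g x * g x' * (C * κ' x' x)) ∂ν ∂ν := by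
          refine lintegral_mono fun x => lintegral_mono fun x' => ?_
          rw [← mul_add]
          gcongr
          exact key x x'
      _ = ∫⁻ x, ∫⁻ x', (g x * g x' * (C * κ' x x')) ∂ν ∂ν +
          ∫⁻ x, ∫⁻ x', (g x * g x' * (C * κ' x' x)) ∂ν ∂ν := by
          rw [← lintegral_add_left (Measurable.lintegral_prod_right' m1)]
          refine lintegral_congr fun x => ?_
          rw [lintegral_add_left (f := fun x' => g x * g x' * (C * κ' x x')) (m1.comp measurable_prodMk_left)]
      _ = ∫⁻ x, ∫⁻ x', (g x * g x' * (C * κ' x x')) ∂ν ∂ν +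
          ∫⁻ x, ∫⁻ x', (g x * g x' * (C * κ' x x')) ∂ν ∂ν := by
          congr 1
          rw [lintegral_lintegral_swap]
          · refine lintegral_congr fun x => lintegral_congr fun x' => by ring
          · exact (((hgm.comp measurable_fst).mul (hgm.comp measurable_snd)).mul
              (measurable_const.mul (hκ2 (by fun_prop) (by fun_prop)))).aemeasurable
      _ ≤ C * (∫⁻ x, g x * Mx ν κ K g x ∂ν) + C * ∫⁻ x, g x * Mx ν κ K g x ∂ν := by gcongr
      _ = _ := by ring
  rw [e1]
  exact (cs_sq ν hf hH).trans (by gcongr)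

theorem maximal_L2 (hm : ∀ k, Measurable (Function.uncurry (κ k)))
    (hsymm : ∀ k x y, κ k x y = κ k y x) (C : ℝ≥0∞) (hC0 : C ≠ 0)
    (hC : ∀ k l, k ≤ l → ∀ x y, ∫⁻ z, κ k x z * κ l z y ∂ν ≤ C * κ k x y)
    (hbd : ∀ k, ∃ b : ℝ≥0∞, b ≠ ∞ ∧ ∀ x y, κ k x y ≤ b)
    (K : ℕ) {f : α → ℝ≥0∞} (hf : Measurable f) :
    ∫⁻ x, Mx ν κ K f x ^ 2 ∂ν ≤ 4 * C ^ 2 * ∫⁻ x, f x ^ 2 ∂ν := by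
  rcases eq_or_ne (∫⁻ x, f x ^ 2 ∂ν) ∞ with hft | hft
  · rw [hft, ENNReal.mul_top (by simp [hC0])]; exact le_top
  obtain ⟨a₁, ha₁, h₁⟩ := maximal_apriori (ν := ν) hbd K
  let A : Set ℝ≥0∞ := {a | ∀ f : α → ℝ≥0∞, Measurable f → ∫⁻ x, f x ^ 2 ∂ν ≠ ∞ →
      ∫⁻ x, Mx ν κ K f x ^ 2 ∂ν ≤ a * ∫⁻ x, f x ^ 2 ∂ν}
  have hA1 : a₁ ∈ A := fun f hf _ => h₁ f hf
  set a := sInf A with ha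
  have hat : a ≠ ∞ := ne_top_of_le_ne_top ha₁ (sInf_le hA1)
  have haA : a ∈ A := by
    intro f hf ht
    rcases eq_or_ne (∫⁻ x, f x ^ 2 ∂ν) 0 with h0 | h0
    · have := h₁ f hf
      rw [h0] at this ⊢
      simpa using this
    rw [← ENNReal.div_le_iff h0 ht]
    refine le_sInf fun b hb => ?_
    rw [ENNReal.div_le_iff h0 ht]
    exact hb f hf ht
  set b := (4 * C ^ 2 * a) ^ (1 / 2 : ℝ) with hb
  have hb2 : b ^ 2 = 4 * C ^ 2 * a := by
    rw [hb, ← ENNReal.rpow_natCast, ← ENNReal.rpow_mul]; norm_num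
  have hbA : b ∈ A := by
    intro f hf ht
    set g := Mx ν κ K f with hg
    have hgm : Measurable g := meas_Mx hm K hf
    set X := ∫⁻ x, g x ^ 2 ∂ν with hX
    set F := ∫⁻ x, f x ^ 2 ∂ν with hF
    have hXt : X ≠ ∞ := ne_top_of_le_ne_top (by finiteness) (h₁ f hf)
    rcases eq_or_ne X 0 with hX0 | hX0
    · rw [hX0]; exact zero_le
    have hs := maximal_step hm hsymm C hC K hf
    rw [← hg, ← hX, ← hF] at hs
    have hY := (cs_sq ν hgm (meas_Mx (ν := ν) hm K hgm)).trans
      (mul_le_mul_right (haA g hgm hXt) X)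
    rw [← hX] at hY
    set Y := ∫⁻ x, g x * Mx ν κ K g x ∂ν with hYd
    have h4 : X ^ 2 * X ^ 2 ≤ (b * F) ^ 2 * X ^ 2 := by
      calc X ^ 2 * X ^ 2 ≤ (F * (2 * C * Y)) * (F * (2 * C * Y)) := by gcongr
        _ = 4 * C ^ 2 * F ^ 2 * Y ^ 2 := by ring
        _ ≤ 4 * C ^ 2 * F ^ 2 * (X * (a * X)) := by gcongr
        _ = (b * F) ^ 2 * X ^ 2 := by rw [mul_pow, hb2]; ring
    have h5 : X ^ 2 ≤ (b * F) ^ 2 :=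
      (ENNReal.mul_le_mul_iff_left (by simp [hX0]) (by finiteness)).1 h4
    exact (ENNReal.pow_right_strictMono two_ne_zero).le_iff_le.1 h5
  have hab : a ≤ b := sInf_le hbA
  have h6 : a * a ≤ 4 * C ^ 2 * a := by
    rw [← hb2, sq]; gcongr
  have h7 : a ≤ 4 * C ^ 2 := by
    rcases eq_or_ne a 0 with h | h
    · rw [h]; exact zero_le
    exact (ENNReal.mul_le_mul_iff_left h hat).1 h6
  exact (haA f hf hft).trans (by gcongr)
end maximal

/-- point on the unit circle -/
def ee (x : ℝ) : ℂ := Complex.exp (x * Complex.I)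

lemma norm_ee (x : ℝ) : ‖ee x‖ = 1 := Complex.norm_exp_ofReal_mul_I x

lemma cont_ee : Continuous ee := by unfold ee; fun_prop

/-- arc measure -/
def arc : Measure ℝ := volume.restrict (Ioo (-Real.pi) Real.pi)

instance : IsFiniteMeasure arc := by
  unfold arc; infer_instance

/-- Poisson kernel -/
def pk (s : ℝ) (w : ℂ) (y : ℝ) : ℝ := (s ^ 2 - ‖w‖ ^ 2) / ‖s * ee y - w‖ ^ 2

lemma pk_nonneg {s : ℝ} (hs : 0 < s) {w : ℂ} (hw : w ∈ ball (0:ℂ) s) (y : ℝ) : 0 ≤ pk s w y := by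
  unfold pk
  have : ‖w‖ < s := by simpa using hw
  have h2 : ‖w‖ ^ 2 ≤ s ^ 2 := by gcongr
  exact div_nonneg (by linarith) (by positivity)

lemma cont_pk {s : ℝ} (hs : 0 < s) {w : ℂ} (hw : w ∈ ball (0:ℂ) s) : Continuous (pk s w) := by
  unfold pk
  have := cont_ee
  refine Continuous.div (by fun_prop) (by fun_prop) fun y => ?_
  have hw' : ‖w‖ < s := by simpa using hw
  have : (s:ℂ) * ee y - w ≠ 0 := by
    intro h
    have h1 : (s:ℂ) * ee y = w := sub_eq_zero.1 h
    rw [← h1] at hw'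
    simp [norm_ee, abs_of_pos hs] at hw'
  positivity

lemma poisson_avg {s : ℝ} (hs : 0 < s) {g : ℂ → ℂ} (hg : DiffContOnCl ℂ g (ball 0 s)) {w : ℂ}
    (hw : w ∈ ball (0:ℂ) s) :
    g w = (2 * Real.pi : ℝ)⁻¹ • ∫ y, (pk s w y) • g (s * ee y) ∂arc := by
  have h := hg.circleAverage_poissonKernel_smul' hw
  rw [← h, Real.circleAverage_eq_integral_add (-Real.pi)]
  congr 1
  rw [intervalIntegral.integral_comp_add_right (fun θ => ((‖circleMap 0 s θ - 0‖ ^ 2 - ‖w - 0‖ ^ 2) /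
    ‖circleMap 0 s θ - 0 - (w - 0)‖ ^ 2) • g (circleMap 0 s θ))]
  rw [intervalIntegral.integral_of_le (by linarith [Real.pi_pos]), arc,
    ← integral_Ioc_eq_integral_Ioo]
  rw [show (0:ℝ) + -Real.pi = -Real.pi by ring, show 2 * Real.pi + -Real.pi = Real.pi by ring]
  refine integral_congr_ae (Filter.Eventually.of_forall fun y => ?_)
  simp [circleMap, pk, ee, abs_of_pos hs, Complex.norm_exp_ofReal_mul_I]

lemma poisson_le {s : ℝ} (hs : 0 < s) {g : ℂ → ℂ} (hg : DiffContOnCl ℂ g (ball 0 s)) {w : ℂ}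
    (hw : w ∈ ball (0:ℂ) s) :
    ‖g w‖ₑ ≤ ∫⁻ y, ENNReal.ofReal (pk s w y) * ‖g (s * ee y)‖ₑ ∂arc := by
  have h1 : ‖(2 * Real.pi : ℝ)⁻¹‖ₑ ≤ 1 := by
    rw [← ofReal_norm, ENNReal.ofReal_le_one, norm_inv, Real.norm_of_nonneg (by positivity)]
    apply inv_le_one_of_one_le₀
    linarith [Real.pi_gt_three]
  rw [poisson_avg hs hg hw, enorm_smul]
  calc _ ≤ 1 * ‖∫ y, (pk s w y) • g (s * ee y) ∂arc‖ₑ := by gcongr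
    _ ≤ ∫⁻ y, ‖(pk s w y) • g (s * ee y)‖ₑ ∂arc := by
      rw [one_mul]; exact enorm_integral_le_lintegral_enorm _
    _ = _ := by
      refine lintegral_congr fun y => ?_
      rw [enorm_smul, Real.enorm_of_nonneg (pk_nonneg hs hw y)]

lemma poisson_one {s : ℝ} (hs : 0 < s) {w : ℂ} (hw : w ∈ ball (0:ℂ) s) :
    ∫⁻ y, ENNReal.ofReal (pk s w y) ∂arc = ENNReal.ofReal (2 * Real.pi) := by
  have h := poisson_avg hs (g := fun _ => (1:ℂ)) diffContOnCl_const hw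
  have hint : Integrable (pk s w) arc := by
    unfold arc
    exact ((cont_pk hs hw).continuousOn.integrableOn_Icc (a := -Real.pi) (b := Real.pi)).mono_set
      Ioo_subset_Icc_self
  rw [← ofReal_integral_eq_lintegral_ofReal hint (Filter.Eventually.of_forall (pk_nonneg hs hw))]
  congr 1
  have h2 : ∫ y, (pk s w y) • (1:ℂ) ∂arc = ((∫ y, pk s w y ∂arc : ℝ) : ℂ) := by
    rw [← integral_complex_ofReal]
    simp
  rw [h2] at h
  have h3 : (1:ℝ) = (2 * Real.pi)⁻¹ * ∫ y, pk s w y ∂arc := by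
    have : ((1:ℝ):ℂ) = (((2 * Real.pi)⁻¹ * ∫ y, pk s w y ∂arc : ℝ) : ℂ) := by
      rw [Complex.ofReal_mul]
      simpa [Complex.real_smul] using h
    exact_mod_cast this
  have := Real.pi_pos
  field_simp at h3
  linarith

/-- real kernel -/
def kr (h d : ℝ) : ℝ := h / (h + d) ^ 2

lemma kr_nonneg {h d : ℝ} (hh : 0 < h) : 0 ≤ kr h d := by unfold kr; positivity

lemma kr_le {h h' a b D : ℝ} (hh' : 0 < h') (hle : h' ≤ h) (ha : 0 ≤ a) (hb : 0 ≤ b) (hD : 0 ≤ D)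
    (hab : D ≤ a + b) : kr h a * kr h' b ≤ 16 * kr h D * (kr h a + kr h' b) := by
  have hh : 0 < h := hh'.trans_le hle
  have n1 := kr_nonneg (d := a) hh
  have n2 := kr_nonneg (d := b) hh'
  have n3 := kr_nonneg (d := D) hh
  have key : kr h a ≤ 16 * kr h D ∨ kr h' b ≤ 16 * kr h D := by
    by_cases c1 : D < h
    · left
      unfold kr
      rw [mul_div_assoc', div_le_div_iff₀ (by positivity) (by positivity)]
      have : (h + D) ^ 2 ≤ 16 * (h + a) ^ 2 := by nlinarith
      nlinarith
    push Not at c1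
    rcases le_total (D / 2) a with c2 | c2
    · left
      unfold kr
      rw [mul_div_assoc', div_le_div_iff₀ (by positivity) (by positivity)]
      have : (h + D) ^ 2 ≤ 16 * (h + a) ^ 2 := by nlinarith
      nlinarith
    · right
      have hb' : D / 2 ≤ b := by linarith
      unfold kr
      rw [mul_div_assoc', div_le_div_iff₀ (by positivity) (by positivity)]
      have : (h + D) ^ 2 ≤ 16 * (h' + b) ^ 2 := by nlinarith
      calc h' * (h + D) ^ 2 ≤ h * (16 * (h' + b) ^ 2) := by gcongr
        _ = _ := by ring
  rcases key with k | k <;> nlinarith [mul_nonneg n3 n1, mul_nonneg n3 n2]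

lemma kr_double {h h' d : ℝ} (hh' : 0 < h') (h1 : h' ≤ h) (h2 : h ≤ 2 * h') (hd : 0 ≤ d) :
    kr h d ≤ 2 * kr h' d := by
  unfold kr
  have hh : 0 < h := hh'.trans_le h1
  rw [mul_div_assoc', div_le_div_iff₀ (by positivity) (by positivity)]
  calc h * (h' + d) ^ 2 ≤ (2 * h') * (h + d) ^ 2 := by gcongr
    _ = _ := by ring

/-- kernel at scale `2^-k` -/
def ker (k : ℕ) (x y : ℝ) : ℝ≥0∞ := ENNReal.ofReal (kr ((1 / 2) ^ k) ‖ee x - ee y‖)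

lemma meas_ker (k : ℕ) : Measurable (Function.uncurry (ker k)) := by
  have := cont_ee.measurable
  unfold ker Function.uncurry kr
  fun_prop

lemma ker_symm (k : ℕ) (x y : ℝ) : ker k x y = ker k y x := by
  unfold ker; rw [norm_sub_rev]

lemma ker_bdd (k : ℕ) : ∃ b : ℝ≥0∞, b ≠ ∞ ∧ ∀ x y, ker k x y ≤ b := by
  refine ⟨ENNReal.ofReal (((1 / 2 : ℝ) ^ k) / ((1 / 2) ^ k) ^ 2), by finiteness, fun x y => ?_⟩
  unfold ker kr
  gcongr
  linarith [norm_nonneg (ee x - ee y)]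

lemma ker_int (k : ℕ) (x : ℝ) : ∫⁻ y, ker k x y ∂arc ≤ ENNReal.ofReal 16 := by
  set h : ℝ := (1 / 2) ^ k with hh
  have h0 : 0 < h := by positivity
  have h1 : h ≤ 1 := pow_le_one₀ (by norm_num) (by norm_num)
  set w : ℂ := ((1 - h / 2 : ℝ) : ℂ) * ee x with hw
  have hwn : ‖w‖ = 1 - h / 2 := by
    rw [hw, norm_mul, norm_ee, Complex.norm_real, Real.norm_of_nonneg (by linarith), mul_one]
  have hwb : w ∈ ball (0:ℂ) 1 := by simp [hwn, h0]
  have hpt : ∀ y, ker k x y ≤ 2 * ENNReal.ofReal (pk 1 w y) := by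
    intro y
    rw [show (2:ℝ≥0∞) = ENNReal.ofReal 2 by simp, ← ENNReal.ofReal_mul (by norm_num)]
    unfold ker
    apply ENNReal.ofReal_le_ofReal
    unfold kr pk
    rw [← hh, hwn]
    have e1 : ‖((1:ℝ):ℂ) * ee y - w‖ ≤ h + ‖ee x - ee y‖ := by
      have : ((1:ℝ):ℂ) * ee y - w = ((h / 2 : ℝ) : ℂ) * ee x - (ee x - ee y) := by
        rw [hw]; push_cast; ring
      rw [this]
      refine (norm_sub_le _ _).trans ?_
      rw [norm_mul, norm_ee, Complex.norm_real, Real.norm_of_nonneg (by linarith)]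
      linarith
    have e2 : 0 < ‖((1:ℝ):ℂ) * ee y - w‖ := by
      have := norm_sub_norm_le (((1:ℝ):ℂ) * ee y) w
      rw [hwn, norm_mul, norm_ee] at this
      simp only [norm_one, mul_one, Complex.norm_real] at this
      linarith
    have : h ≤ 2 * (1 ^ 2 - (1 - h / 2) ^ 2) := by nlinarith
    rw [mul_div_assoc']
    apply div_le_div₀ (by linarith) this (by positivity)
    gcongr
  calc ∫⁻ y, ker k x y ∂arc ≤ ∫⁻ y, 2 * ENNReal.ofReal (pk 1 w y) ∂arc := lintegral_mono hpt
    _ = 2 * ENNReal.ofReal (2 * Real.pi) := by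
      rw [lintegral_const_mul _ (cont_pk one_pos hwb).measurable.ennreal_ofReal,
        poisson_one one_pos hwb]
    _ ≤ _ := by
      rw [show (2:ℝ≥0∞) = ENNReal.ofReal 2 by simp, ← ENNReal.ofReal_mul (by norm_num)]
      apply ENNReal.ofReal_le_ofReal
      linarith [Real.pi_le_four]

lemma ker_pt (k l : ℕ) (hkl : k ≤ l) (x y z : ℝ) :
    ker k x z * ker l z y ≤ 16 * ker k x y * (ker k x z + ker l z y) := by
  have p1 : 0 < ((1:ℝ) / 2) ^ k := by positivity
  have p2 : 0 < ((1:ℝ) / 2) ^ l := by positivity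
  have h := kr_le p2 (pow_le_pow_of_le_one (by norm_num) (by norm_num) hkl)
      (norm_nonneg (ee x - ee z)) (norm_nonneg (ee z - ee y)) (norm_nonneg (ee x - ee y))
      (norm_sub_le_norm_sub_add_norm_sub _ _ _)
  have h2 := ENNReal.ofReal_le_ofReal h
  rw [ENNReal.ofReal_mul (kr_nonneg p1), ENNReal.ofReal_mul (mul_nonneg (by norm_num) (kr_nonneg p1)),
    ENNReal.ofReal_mul (by norm_num), ENNReal.ofReal_add (kr_nonneg p1) (kr_nonneg p2),
    show ENNReal.ofReal 16 = 16 by simp] at h2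
  exact h2

lemma ker_comp (k l : ℕ) (hkl : k ≤ l) (x y : ℝ) :
    ∫⁻ z, ker k x z * ker l z y ∂arc ≤ 512 * ker k x y := by
  have hpt : ∀ z, ker k x z * ker l z y ≤ 16 * ker k x y * (ker k x z + ker l y z) := by
    intro z
    rw [ker_symm l y z]
    exact ker_pt k l hkl x y z
  have m : ∀ k x, Measurable (ker k x) := fun k x => (meas_ker k).of_uncurry_left
  have e : ENNReal.ofReal 16 = 16 := by simp
  have i1 := ker_int k x
  have i2 := ker_int l y
  rw [e] at i1 i2
  calc ∫⁻ z, ker k x z * ker l z y ∂arc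
      ≤ ∫⁻ z, 16 * ker k x y * (ker k x z + ker l y z) ∂arc := lintegral_mono hpt
    _ = 16 * ker k x y * (∫⁻ z, ker k x z ∂arc + ∫⁻ z, ker l y z ∂arc) := by
      rw [lintegral_const_mul _ (f := fun z => ker k x z + ker l y z) ((m k x).add (m l y)),
        lintegral_add_left (m k x)]
    _ ≤ 16 * ker k x y * (16 + 16) := by
      exact mul_le_mul' le_rfl (add_le_add i1 i2)
    _ = 512 * ker k x y := by
      rw [mul_right_comm]
      congr 1
      norm_num

lemma arc_maximal (K : ℕ) {f : ℝ → ℝ≥0∞} (hf : Measurable f) :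
    ∫⁻ x, Mx arc ker K f x ^ 2 ∂arc ≤ (4 * 512 ^ 2) * ∫⁻ x, f x ^ 2 ∂arc :=
  maximal_L2 meas_ker ker_symm 512 (by norm_num) ker_comp ker_bdd K hf


/-- maximal operator in coordinate `i` -/
def MM {n : ℕ} (K : ℕ) (i : Fin n) (g : (Fin n → ℝ) → ℝ≥0∞) (x : Fin n → ℝ) : ℝ≥0∞ :=
  Mx arc ker K (fun y => g (Function.update x i y)) (x i)

/-- iterated maximal operator -/
def ML {n : ℕ} (K : ℕ) : List (Fin n) → ((Fin n → ℝ) → ℝ≥0∞) → (Fin n → ℝ) → ℝ≥0∞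
  | [], g => g
  | i :: l, g => MM K i (ML K l g)

/-- torus measure in angular coordinates -/
def tm (n : ℕ) : Measure (Fin n → ℝ) := Measure.pi fun _ => arc

lemma meas_MM {n : ℕ} (K : ℕ) (i : Fin n) {g : (Fin n → ℝ) → ℝ≥0∞} (hg : Measurable g) :
    Measurable (MM K i g) := by
  unfold MM Mx
  induction K with
  | zero => simp
  | succ K ih =>
    simp only [Finset.range_add_one, Finset.sup_insert]
    refine Measurable.sup ?_ ih
    unfold Av
    apply Measurable.lintegral_prod_right' (f := fun p : (Fin n → ℝ) × ℝ =>
      ker K (p.1 i) p.2 * g (Function.update p.1 i p.2))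
    refine Measurable.mul ?_ (hg.comp measurable_update')
    exact (meas_ker K).comp (f := fun p : (Fin n → ℝ) × ℝ => (p.1 i, p.2)) (by fun_prop)

lemma meas_ML {n : ℕ} (K : ℕ) (l : List (Fin n)) {g : (Fin n → ℝ) → ℝ≥0∞} (hg : Measurable g) :
    Measurable (ML K l g) := by
  induction l with
  | nil => exact hg
  | cons i l ih => exact meas_MM K i ih

lemma MM_L2 {n : ℕ} (K : ℕ) (i : Fin n) {g : (Fin n → ℝ) → ℝ≥0∞} (hg : Measurable g) :
    ∫⁻ x, MM K i g x ^ 2 ∂(tm n) ≤ (4 * 512 ^ 2) * ∫⁻ x, g x ^ 2 ∂(tm n) := by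
  rw [← lintegral_const_mul _ (f := fun x => g x ^ 2) (hg.pow_const 2)]
  unfold tm
  apply lintegral_le_of_lmarginal_le {i} ((meas_MM K i hg).pow_const 2)
    ((hg.pow_const 2).const_mul _)
  rw [lmarginal_singleton, lmarginal_singleton]
  intro x
  have hgx : Measurable (fun y => g (Function.update x i y)) := hg.comp (measurable_update x)
  have := arc_maximal K hgx
  rw [← lintegral_const_mul _ (f := fun y => g (Function.update x i y) ^ 2) (hgx.pow_const 2)] at this
  refine le_trans (le_of_eq ?_) this
  refine lintegral_congr fun y => ?_
  simp [MM]

lemma ML_L2 {n : ℕ} (K : ℕ) (l : List (Fin n)) {g : (Fin n → ℝ) → ℝ≥0∞} (hg : Measurable g) :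
    ∫⁻ x, ML K l g x ^ 2 ∂(tm n) ≤ (4 * 512 ^ 2) ^ l.length * ∫⁻ x, g x ^ 2 ∂(tm n) := by
  induction l with
  | nil => simp [ML]
  | cons i l ih =>
    refine (MM_L2 K i (meas_ML K l hg)).trans ?_
    rw [List.length_cons, pow_succ' _ l.length, mul_assoc _ _ (∫⁻ x, g x ^ 2 ∂(tm n))]
    exact mul_le_mul' le_rfl ih

lemma pk_le_ker {s c x : ℝ} {ω z : ℂ} {K : ℕ} (hs1 : s < 1) (hω : ‖ω‖ = 1)
    (hc0 : 0 < c) (hc1 : c ≤ 1) (hK : (1 / 2) ^ K < (s - ‖z‖) / 2)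
    (hd : ∀ y, c * ‖ee x - ee y‖ ≤ ‖z - s * ω * ee y‖) (w : ℂ) (hw : z = ω * w) :
    ∃ k < K, ∀ y, ENNReal.ofReal (pk s w y) ≤ ENNReal.ofReal (16 / c ^ 2) * ker k x y := by
  set h := s - ‖z‖ with hh
  have hKp : (0:ℝ) < (1 / 2) ^ K := by positivity
  have hp : 0 < h := by linarith
  have hz0 := norm_nonneg z
  obtain ⟨k, hk1, hk2⟩ := exists_nat_pow_near_of_lt_one hp (by linarith) (y := (1 / 2 : ℝ))
    (by norm_num) (by norm_num)
  refine ⟨k + 1, ?_, fun y => ?_⟩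
  · by_contra hcon
    have : ((1:ℝ) / 2) ^ (k + 1) ≤ (1 / 2) ^ K :=
      pow_le_pow_of_le_one (by norm_num) (by norm_num) (by omega)
    rw [pow_succ] at this
    linarith
  · unfold ker
    rw [← ENNReal.ofReal_mul (by positivity)]
    apply ENNReal.ofReal_le_ofReal
    have hzw : ‖z‖ = ‖w‖ := by rw [hw, norm_mul, hω, one_mul]
    set d := ‖ee x - ee y‖ with hdd
    have hd0 : 0 ≤ d := norm_nonneg _
    have hkr := kr_double (h := h) (h' := (1 / 2) ^ (k + 1)) (d := d) (by positivity) hk1.le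
      (by rw [pow_succ]; linarith) hd0
    have hD : ‖(s:ℂ) * ee y - w‖ = ‖z - s * ω * ee y‖ := by
      rw [hw, show ω * w - s * ω * ee y = -(ω * (s * ee y - w)) by ring, norm_neg, norm_mul, hω,
        one_mul]
    have hD1 := hd y
    have hs : 0 < s := by linarith
    have hD2 : h ≤ ‖(s:ℂ) * ee y - w‖ := by
      have := norm_sub_norm_le ((s:ℂ) * ee y) w
      rw [norm_mul, norm_ee, Complex.norm_real, Real.norm_of_nonneg hs.le, ← hzw] at this
      linarith
    rw [← hD] at hD1
    set D := ‖(s:ℂ) * ee y - w‖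
    have hD3 : c / 2 * (h + d) ≤ D := by nlinarith
    have h1 : pk s w y ≤ 8 / c ^ 2 * kr h d := by
      unfold pk kr
      change (s ^ 2 - ‖w‖ ^ 2) / D ^ 2 ≤ _
      rw [← hzw]
      calc (s ^ 2 - ‖z‖ ^ 2) / D ^ 2 ≤ (2 * h) / (c / 2 * (h + d)) ^ 2 := by
            apply div_le_div₀ (by linarith) (by nlinarith) (by positivity)
            gcongr
        _ = _ := by field_simp; ring
    calc pk s w y ≤ 8 / c ^ 2 * kr h d := h1
      _ ≤ 8 / c ^ 2 * (2 * kr ((1 / 2) ^ (k + 1)) d) := by gcongr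
      _ = _ := by ring

lemma slice_diff {n : ℕ} {f : (Fin n → ℂ) → ℂ} (hf : DifferentiableOn ℂ f (polydisc n))
    {z : Fin n → ℂ} (hz : z ∈ polydisc n) (i : Fin n) {s : ℝ} (hs0 : 0 < s) (hs : s < 1) {ω : ℂ}
    (hω : ‖ω‖ = 1) :
    DiffContOnCl ℂ (fun ξ => f (Function.update z i (ω * ξ))) (ball 0 s) := by
  apply DifferentiableOn.diffContOnCl
  rw [closure_ball _ hs0.ne']
  refine hf.comp (t := polydisc n) ?_ ?_
  · refine Differentiable.differentiableOn ?_
    rw [differentiable_pi]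
    intro j
    by_cases hj : j = i
    · subst hj; simp; fun_prop
    · simp [hj]
  · intro ξ hξ j
    by_cases hj : j = i
    · subst hj
      have : ‖ξ‖ ≤ s := by simpa using hξ
      simp [hω]; linarith
    · simpa [hj] using hz j

lemma pointwise {n : ℕ} {f : (Fin n → ℂ) → ℂ} (hf : DifferentiableOn ℂ f (polydisc n))
    {s : Fin n → ℝ} {ω : Fin n → ℂ} (hs0 : ∀ i, 0 < s i) (hs1 : ∀ i, s i < 1)
    (hω : ∀ i, ‖ω i‖ = 1) {c : ℝ} (hc0 : 0 < c) (hc1 : c ≤ 1) (K : ℕ) (l : List (Fin n))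
    (hl : l.Nodup) : ∀ (x : Fin n → ℝ) (z : Fin n → ℂ),
    (∀ i, i ∉ l → z i = s i * ω i * ee (x i)) →
    (∀ i ∈ l, (1 / 2) ^ K < (s i - ‖z i‖) / 2 ∧
      ∀ y, c * ‖ee (x i) - ee y‖ ≤ ‖z i - s i * ω i * ee y‖) →
    ‖f z‖ₑ ≤ ENNReal.ofReal (16 / c ^ 2) ^ l.length *
      ML K l (fun y => ‖f (fun i => s i * ω i * ee (y i))‖ₑ) x := by
  induction l with
  | nil =>
    intro x z h1 _
    have : z = fun i => s i * ω i * ee (x i) := funext fun i => h1 i (by simp)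
    simp [ML, this]
  | cons i l ih =>
    intro x z h1 h2
    have hil : i ∉ l := (List.nodup_cons.1 hl).1
    have hll : l.Nodup := (List.nodup_cons.1 hl).2
    obtain ⟨hKi, hdi⟩ := h2 i (by simp)
    have hz : z ∈ polydisc n := by
      intro j
      have hKp : (0:ℝ) < (1 / 2) ^ K := by positivity
      by_cases hj : j ∈ i :: l
      · have := (h2 j hj).1
        have := hs1 j
        linarith
      · rw [h1 j hj, norm_mul, norm_mul, hω, norm_ee, Complex.norm_real,
          Real.norm_of_nonneg (hs0 j).le]
        simpa using hs1 j
    have hKp : (0:ℝ) < (1 / 2) ^ K := by positivity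
    have hω0 : ω i ≠ 0 := by
      intro h; have := hω i; simp [h] at this
    set w := (ω i)⁻¹ * z i with hw
    have hzw : z i = ω i * w := by rw [hw, mul_inv_cancel_left₀ hω0]
    have hwn : ‖w‖ = ‖z i‖ := by simp [hw, hω]
    obtain ⟨k, hkK, hk⟩ := pk_le_ker (hs1 i) (hω i) hc0 hc1 hKi hdi w hzw
    have hp := poisson_le (hs0 i) (slice_diff hf hz i (hs0 i) (hs1 i) (hω i)) (w := w)
      (by simp [hwn]; linarith)
    simp only [← hzw, Function.update_eq_self] at hp
    set C := ENNReal.ofReal (16 / c ^ 2) with hC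
    set G := ML K l (fun y => ‖f (fun i => s i * ω i * ee (y i))‖ₑ) with hG
    have hstep : ∀ y, ‖f (Function.update z i (ω i * (s i * ee y)))‖ₑ ≤
        C ^ l.length * G (Function.update x i y) := by
      intro y
      apply ih hll
      · intro j hj
        by_cases hji : j = i
        · subst hji; simp; ring
        · simp only [Function.update_of_ne hji]
          exact h1 j (by simp [hji, hj])
      · intro j hj
        have hji : j ≠ i := by rintro rfl; exact hil hj
        simp only [Function.update_of_ne hji]
        exact h2 j (by simp [hj])
    have hCt : C ≠ ∞ := by simp [hC]
    calc ‖f z‖ₑ ≤ _ := hp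
      _ ≤ ∫⁻ y, C ^ (l.length + 1) * (ker k (x i) y * G (Function.update x i y)) ∂arc := by
        refine lintegral_mono fun y => ?_
        calc _ ≤ (C * ker k (x i) y) * (C ^ l.length * G (Function.update x i y)) :=
              mul_le_mul' (hk y) (hstep y)
          _ = _ := by ring
      _ = C ^ (l.length + 1) * Av arc ker k (fun y => G (Function.update x i y)) (x i) := by
        rw [lintegral_const_mul' _ _ (by finiteness)]; rfl
      _ ≤ _ := by
        rw [List.length_cons]
        refine mul_le_mul' le_rfl ?_
        exact Finset.le_sup (f := fun k => Av arc ker k (fun y => G (Function.update x i y)) (x i))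
          (Finset.mem_range.2 hkK)

lemma tm_eq (n : ℕ) : tm n = volume.restrict (Set.univ.pi fun _ => Ioo (-Real.pi) Real.pi) := by
  unfold tm arc
  rw [← Measure.restrict_pi_pi]
  rfl

lemma map_le {n : ℕ} {U : Set (Fin n → ℝ)} (hU : MeasurableSet U) {Ψ : (Fin n → ℝ) → (Fin n → ℝ)}
    (hc : ContinuousOn Ψ U) (Kc : NNReal) (ha : ∀ θ ∈ U, ∀ θ' ∈ U, dist θ θ' ≤ Kc * dist (Ψ θ) (Ψ θ'))
    (hQ : ∀ θ ∈ U, ∀ i, Ψ θ i ∈ Ioo (-Real.pi) Real.pi) :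
    (volume.restrict U).map Ψ ≤ ((Kc : ℝ≥0∞) ^ n) • tm n := by
  refine Measure.le_iff.2 fun E hE => ?_
  rw [Measure.map_apply_of_aemeasurable (hc.aemeasurable hU) hE, Measure.smul_apply, tm_eq,
    Measure.restrict_apply hE, Measure.restrict_apply' hU]
  rcases (Ψ ⁻¹' E ∩ U).eq_empty_or_nonempty with h0 | ⟨θ₀, _⟩
  · rw [h0]; simp
  have : Nonempty (Fin n → ℝ) := ⟨θ₀⟩
  have hinj : InjOn Ψ U := by
    intro a ha' b hb hab
    have := ha a ha' b hb
    rw [hab, dist_self, mul_zero] at this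
    exact dist_le_zero.1 this
  set T := Ψ '' (Ψ ⁻¹' E ∩ U) with hT
  set g := Function.invFunOn Ψ U
  have hg : ∀ θ ∈ U, g (Ψ θ) = θ := fun θ h => hinj.leftInvOn_invFunOn h
  have hgT : g '' T = Ψ ⁻¹' E ∩ U := by
    rw [hT, image_image]
    refine (image_congr fun θ h => hg θ h.2).trans (image_id' _)
  have hlip : LipschitzOnWith Kc g T := by
    apply LipschitzOnWith.of_dist_le_mul
    rintro _ ⟨a, ha', rfl⟩ _ ⟨b, hb, rfl⟩
    rw [hg a ha'.2, hg b hb.2]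
    exact ha a ha'.2 b hb.2
  have h1 := hlip.hausdorffMeasure_image_le (d := (Fintype.card (Fin n) : ℝ)) (by positivity)
  rw [hgT, hausdorffMeasure_pi_real] at h1
  refine h1.trans ?_
  rw [Fintype.card_fin, ENNReal.rpow_natCast, smul_eq_mul]
  gcongr
  rintro _ ⟨a, ha', rfl⟩
  exact ⟨ha'.1, fun i _ => hQ a ha'.2 i⟩

/-- the constant in the analytic lemma -/
def ALc (n : ℕ) (c : ℝ) (Kc : NNReal) : ℝ≥0∞ :=
  (ENNReal.ofReal (16 / c ^ 2) ^ n) ^ 2 * ((Kc : ℝ≥0∞) ^ n * (4 * 512 ^ 2) ^ n)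

lemma ALc_ne_top (n : ℕ) (c : ℝ) (Kc : NNReal) : ALc n c Kc ≠ ∞ := by
  unfold ALc; finiteness

lemma cont_torus {n : ℕ} {f : (Fin n → ℂ) → ℂ} (hf : ContinuousOn f (polydisc n))
    {s : Fin n → ℝ} {ω : Fin n → ℂ} (hs0 : ∀ i, 0 < s i) (hs1 : ∀ i, s i < 1)
    (hω : ∀ i, ‖ω i‖ = 1) : Continuous (fun y : Fin n → ℝ => f (fun i => s i * ω i * ee (y i))) := by
  have := cont_ee
  refine hf.comp_continuous (f := fun (y : Fin n → ℝ) i => s i * ω i * ee (y i)) (by fun_prop) ?_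
  intro y i
  simp only [norm_mul, hω, norm_ee, Complex.norm_real, Real.norm_of_nonneg (hs0 i).le]
  simpa using hs1 i

theorem AL {n : ℕ} {f : (Fin n → ℂ) → ℂ} (hf : DifferentiableOn ℂ f (polydisc n))
    {s : Fin n → ℝ} {ω : Fin n → ℂ} (hs0 : ∀ i, 0 < s i) (hs1 : ∀ i, s i < 1)
    (hω : ∀ i, ‖ω i‖ = 1) {c : ℝ} (hc0 : 0 < c) (hc1 : c ≤ 1)
    {U : Set (Fin n → ℝ)} (hU : MeasurableSet U) {Ψ : (Fin n → ℝ) → (Fin n → ℝ)}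
    (hc : ContinuousOn Ψ U) (Kc : NNReal) (ha : ∀ θ ∈ U, ∀ θ' ∈ U, dist θ θ' ≤ Kc * dist (Ψ θ) (Ψ θ'))
    (hQ : ∀ θ ∈ U, ∀ i, Ψ θ i ∈ Ioo (-Real.pi) Real.pi)
    {W : (Fin n → ℝ) → (Fin n → ℂ)} {δ : ℝ} (hδ : 0 < δ)
    (hW : ∀ θ ∈ U, ∀ i, ‖W θ i‖ ≤ s i - δ)
    (hd : ∀ θ ∈ U, ∀ i y, c * ‖ee (Ψ θ i) - ee y‖ ≤ ‖W θ i - s i * ω i * ee y‖) :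
    ∫⁻ θ in U, ‖f (W θ)‖ₑ ^ 2 ≤
      ALc n c Kc * ∫⁻ y, ‖f (fun i => s i * ω i * ee (y i))‖ₑ ^ 2 ∂(tm n) := by
  obtain ⟨K, hK⟩ := exists_pow_lt_of_lt_one (show 0 < δ / 2 by positivity)
    (show (1 / 2 : ℝ) < 1 by norm_num)
  have hgm : Measurable (fun y : Fin n → ℝ => ‖f (fun i => s i * ω i * ee (y i))‖ₑ) :=
    (cont_torus hf.continuousOn hs0 hs1 hω).enorm.measurable
  set l := List.finRange n with hl
  have hll : l.length = n := by simp [hl]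
  set G := ML K l (fun y => ‖f (fun i => s i * ω i * ee (y i))‖ₑ) with hG
  have hGm : Measurable G := meas_ML K l hgm
  have hpt : ∀ θ ∈ U, ‖f (W θ)‖ₑ ≤ ENNReal.ofReal (16 / c ^ 2) ^ n * G (Ψ θ) := by
    intro θ hθ
    have := pointwise hf hs0 hs1 hω hc0 hc1 K l (List.nodup_finRange n) (Ψ θ) (W θ)
      (fun i hi => absurd (List.mem_finRange i) hi)
      (fun i _ => ⟨by linarith [hW θ hθ i], hd θ hθ i⟩)
    rwa [hll] at this
  have hCt : ENNReal.ofReal (16 / c ^ 2) ^ n ≠ ∞ := by finiteness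
  set C := ENNReal.ofReal (16 / c ^ 2) ^ n
  calc ∫⁻ θ in U, ‖f (W θ)‖ₑ ^ 2 ≤ ∫⁻ θ in U, C ^ 2 * G (Ψ θ) ^ 2 := by
        refine setLIntegral_mono' hU fun θ hθ => ?_
        rw [← mul_pow]
        gcongr
        exact hpt θ hθ
    _ = C ^ 2 * ∫⁻ θ in U, G (Ψ θ) ^ 2 := by
        rw [lintegral_const_mul' _ _ (by finiteness)]
    _ = C ^ 2 * ∫⁻ y, G y ^ 2 ∂((volume.restrict U).map Ψ) := by
        rw [lintegral_map' (hGm.pow_const 2).aemeasurable (hc.aemeasurable hU)]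
    _ ≤ C ^ 2 * ∫⁻ y, G y ^ 2 ∂(((Kc : ℝ≥0∞) ^ n) • tm n) := by
        gcongr
        exact map_le hU hc Kc ha hQ
    _ = C ^ 2 * ((Kc : ℝ≥0∞) ^ n * ∫⁻ y, G y ^ 2 ∂(tm n)) := by
        rw [lintegral_smul_measure, smul_eq_mul]
    _ ≤ C ^ 2 * ((Kc : ℝ≥0∞) ^ n * ((4 * 512 ^ 2) ^ n *
          ∫⁻ y, ‖f (fun i => s i * ω i * ee (y i))‖ₑ ^ 2 ∂(tm n))) := by
        have := ML_L2 K l hgm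
        rw [hll] at this
        gcongr
    _ = _ := by
        unfold ALc
        simp only [mul_assoc]
        rfl

lemma polydisc_eq (n : ℕ) : polydisc n = Set.univ.pi fun _ => ball (0:ℂ) 1 := by
  ext z; simp [polydisc]

lemma closedPolydisc_eq (n : ℕ) : closedPolydisc n = Set.univ.pi fun _ => closedBall (0:ℂ) 1 := by
  ext z; simp [closedPolydisc]

lemma isOpen_polydisc (n : ℕ) : IsOpen (polydisc n) := by
  rw [polydisc_eq]; exact isOpen_set_pi finite_univ fun _ _ => isOpen_ball

lemma closure_polydisc (n : ℕ) : closure (polydisc n) = closedPolydisc n := by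
  rw [polydisc_eq, closedPolydisc_eq, closure_pi_set]
  simp [closure_ball]

lemma convex_cp (n : ℕ) : Convex ℝ (closedPolydisc n) := by
  rw [closedPolydisc_eq]; exact convex_pi fun _ _ => convex_closedBall _ _

lemma polydisc_sub (n : ℕ) : polydisc n ⊆ closedPolydisc n := fun _ hz j => (hz j).le

lemma udo_cp (n : ℕ) : UniqueDiffOn ℝ (closedPolydisc n) := by
  refine uniqueDiffOn_convex (convex_cp n) ⟨0, ?_⟩
  refine mem_interior.2 ⟨polydisc n, polydisc_sub n, isOpen_polydisc n, ?_⟩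
  intro j; simp

lemma strict_of_convex {X Y : Type*} [NormedAddCommGroup X] [NormedSpace ℝ X]
    [NormedAddCommGroup Y] [NormedSpace ℝ Y] {S : Set X} (hS : Convex ℝ S) (hu : UniqueDiffOn ℝ S)
    {F : X → Y} (hF : ContDiffOn ℝ 1 F S) {x : X} (hx : x ∈ S) :
    HasFDerivAtFilter F (fderivWithin ℝ F S x) (nhdsWithin (x, x) (S ×ˢ S)) := by
  refine .of_isLittleO ?_
  rw [Asymptotics.isLittleO_iff]
  intro κ hκ
  have hc := hF.continuousOn_fderivWithin hu le_rfl x hx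
  obtain ⟨r, hr, hr'⟩ := Metric.continuousWithinAt_iff.1 hc κ hκ
  have hd : ∀ y ∈ S ∩ ball x r, HasFDerivWithinAt F (fderivWithin ℝ F S y) (S ∩ ball x r) y :=
    fun y hy => ((hF.differentiableOn one_ne_zero y hy.1).hasFDerivWithinAt).mono inter_subset_left
  have hb : ∀ y ∈ S ∩ ball x r, ‖fderivWithin ℝ F S y - fderivWithin ℝ F S x‖ ≤ κ := by
    intro y hy
    rw [← dist_eq_norm]
    exact (hr' hy.1 hy.2).le
  have hb2 : ball x r ×ˢ ball x r ∈ nhds (x, x) := prod_mem_nhds (ball_mem_nhds _ hr) (ball_mem_nhds _ hr)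
  filter_upwards [self_mem_nhdsWithin, mem_nhdsWithin_of_mem_nhds hb2] with p h1 h2
  exact (hS.inter (convex_ball x r)).norm_image_sub_le_of_norm_hasFDerivWithin_le' hd hb
    ⟨h1.2, h2.2⟩ ⟨h1.1, h2.1⟩

lemma Phi_cp {n : ℕ} {Φ : (Fin n → ℂ) → (Fin n → ℂ)}
    (hsm : ContDiffOn ℝ 1 Φ (closedPolydisc n))
    (hmap : ∀ z ∈ polydisc n, Φ z ∈ polydisc n) {z : Fin n → ℂ} (hz : z ∈ closedPolydisc n) :
    Φ z ∈ closedPolydisc n := by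
  have h1 : MapsTo Φ (polydisc n) (polydisc n) := hmap
  have h2 := h1.closure_of_continuousOn (by rw [closure_polydisc]; exact hsm.continuousOn)
  rw [closure_polydisc] at h2
  exact h2 hz

lemma deriv_clinear {n : ℕ} {Φ : (Fin n → ℂ) → (Fin n → ℂ)}
    (hhol : DifferentiableOn ℂ Φ (polydisc n))
    (hsm : ContDiffOn ℝ 1 Φ (closedPolydisc n)) {ζ : Fin n → ℂ} (hζ : ζ ∈ closedPolydisc n)
    (a : ℂ) (v : Fin n → ℂ) :
    fderivWithin ℝ Φ (closedPolydisc n) ζ (a • v) = a • fderivWithin ℝ Φ (closedPolydisc n) ζ v := by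
  have hc := hsm.continuousOn_fderivWithin (udo_cp n) le_rfl
  have hE : EqOn (fun z => fderivWithin ℝ Φ (closedPolydisc n) z (a • v))
      (fun z => a • fderivWithin ℝ Φ (closedPolydisc n) z v) (polydisc n) := by
    intro z hz
    have hn : closedPolydisc n ∈ nhds z :=
      Filter.mem_of_superset ((isOpen_polydisc n).mem_nhds hz) (polydisc_sub n)
    have hd : DifferentiableAt ℂ Φ z := (hhol z hz).differentiableAt ((isOpen_polydisc n).mem_nhds hz)
    have := hd.fderiv_restrictScalars ℝ
    simp only [fderivWithin_of_mem_nhds hn, this]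
    simp
  have := hE.of_subset_closure (t := closedPolydisc n) (hc.clm_apply continuousOn_const)
    ((hc.clm_apply continuousOn_const).const_smul a) (polydisc_sub n) (by rw [closure_polydisc])
  exact this hζ

lemma deriv_jac {n : ℕ} {Φ : (Fin n → ℂ) → (Fin n → ℂ)}
    (hhol : DifferentiableOn ℂ Φ (polydisc n))
    (hsm : ContDiffOn ℝ 1 Φ (closedPolydisc n)) {ζ : Fin n → ℂ} (hζ : ζ ∈ closedPolydisc n)
    (v : Fin n → ℂ) (i : Fin n) :
    fderivWithin ℝ Φ (closedPolydisc n) ζ v i = ∑ j, jacEntry n Φ ζ i j * v j := by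
  have hv : v = ∑ j, v j • (Pi.single j 1 : Fin n → ℂ) := by
    ext k; simp [Finset.sum_apply, Pi.single_apply]
  conv_lhs => rw [hv]
  rw [map_sum, Finset.sum_apply]
  refine Finset.sum_congr rfl fun j _ => ?_
  rw [deriv_clinear hhol hsm hζ]
  simp [jacEntry, mul_comm]

/-- product of left half-planes -/
def HP (n : ℕ) : Set (Fin n → ℂ) := {l | ∀ j, (l j).re ≤ 0}

/-- coordinatewise exponential -/
def Ex {n : ℕ} (l : Fin n → ℂ) : Fin n → ℂ := fun j => Complex.exp (l j)

lemma Ex_cp {n : ℕ} {l : Fin n → ℂ} (hl : l ∈ HP n) : Ex l ∈ closedPolydisc n := by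
  intro j
  simp only [Ex, Complex.norm_exp]
  exact Real.exp_le_one_iff.2 (hl j)

lemma strict_Ex {n : ℕ} (l : Fin n → ℂ) :
    HasStrictFDerivAt (𝕜 := ℝ) (Ex (n := n))
      (ContinuousLinearMap.pi fun j => (Complex.exp (l j)) •
        (ContinuousLinearMap.proj (R := ℝ) (φ := fun _ : Fin n => ℂ) j)) l := by
  rw [hasStrictFDerivAt_pi]
  intro j
  have h1 : HasStrictFDerivAt (𝕜 := ℂ) (fun l : Fin n → ℂ => Complex.exp (l j))
    (Complex.exp (l j) • ContinuousLinearMap.proj (R := ℂ) (φ := fun _ : Fin n => ℂ) j) l :=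
    ((ContinuousLinearMap.proj (R := ℂ) (φ := fun _ : Fin n => ℂ) j).hasStrictFDerivAt).cexp
  exact h1.restrictScalars ℝ

lemma strictN {n : ℕ} {Φ : (Fin n → ℂ) → (Fin n → ℂ)}
    (hhol : DifferentiableOn ℂ Φ (polydisc n))
    (hsm : ContDiffOn ℝ 1 Φ (closedPolydisc n)) (l₀ : Fin n → ℂ) (hl₀ : l₀ ∈ HP n) (i : Fin n)
    {ω : ℂ} (hω : Φ (Ex l₀) i = ω) (hω0 : ω ≠ 0) {κ : ℝ} (hκ : 0 < κ) :
    ∃ ρ > 0, ∀ l ∈ HP n ∩ ball l₀ ρ, ∀ l' ∈ HP n ∩ ball l₀ ρ,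
      ‖Complex.log (ω⁻¹ * Φ (Ex l) i) - Complex.log (ω⁻¹ * Φ (Ex l') i)
        - ∑ j, (ω⁻¹ * jacEntry n Φ (Ex l₀) i j * Ex l₀ j) * (l j - l' j)‖ ≤ κ * ‖l - l'‖ := by
  have hζ := Ex_cp hl₀
  have h1 : HasFDerivAtFilter (𝕜 := ℝ) (Ex (n := n)) _ (nhdsWithin (l₀, l₀) (HP n ×ˢ HP n)) :=
    HasFDerivAtFilter.mono (strict_Ex l₀) nhdsWithin_le_nhds
  have h2 := strict_of_convex (convex_cp n) (udo_cp n) hsm hζ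
  have t1 : Filter.Tendsto (Prod.map Ex Ex) (nhdsWithin (l₀, l₀) (HP n ×ˢ HP n))
      (nhdsWithin (Ex l₀, Ex l₀) (closedPolydisc n ×ˢ closedPolydisc n)) := by
    have hcE : Continuous (Ex (n := n)) := by unfold Ex; fun_prop
    refine ((hcE.prodMap hcE).continuousWithinAt).tendsto_nhdsWithin ?_
    rintro ⟨a, b⟩ ⟨ha, hb⟩
    exact ⟨Ex_cp ha, Ex_cp hb⟩
  have h3 := h2.comp h1 t1
  have t2 := (((hsm.continuousOn _ hζ).prodMap (hsm.continuousOn _ hζ)).tendsto).comp t1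
  let P : (Fin n → ℂ) →L[ℝ] ℂ := ω⁻¹ • ContinuousLinearMap.proj (R := ℝ) (φ := fun _ : Fin n => ℂ) i
  have hP : P (Φ (Ex l₀)) = 1 := by simp [P, hω, hω0]
  have h4 : HasFDerivAtFilter (𝕜 := ℝ) P P (nhds (Φ (Ex l₀), Φ (Ex l₀))) := P.hasStrictFDerivAt
  have h5 : HasFDerivAtFilter (𝕜 := ℝ) Complex.log (ContinuousLinearMap.id ℝ ℂ)
      (nhds (P (Φ (Ex l₀)), P (Φ (Ex l₀)))) := by
    rw [hP]
    have h := (Complex.hasStrictDerivAt_log (x := 1) (by simp)).hasStrictFDerivAt.restrictScalars ℝ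
    have e : ContinuousLinearMap.restrictScalars ℝ (ContinuousLinearMap.toSpanSingleton ℂ (1⁻¹:ℂ))
      = ContinuousLinearMap.id ℝ ℂ := by
      ext <;> simp
    rw [e] at h
    exact h
  have h6 := h4.comp h3 t2
  have t3 := ((P.continuous.prodMap P.continuous).tendsto (Φ (Ex l₀), Φ (Ex l₀))).comp t2
  have h7 := h5.comp h6 t3
  have h8 := (Asymptotics.isLittleO_iff.1 h7.isLittleO) hκ
  rw [eventually_nhdsWithin_iff, Metric.eventually_nhds_iff] at h8
  obtain ⟨ρ, hρ, h8⟩ := h8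
  refine ⟨ρ, hρ, fun l hl l' hl' => ?_⟩
  have h9 := h8 (y := (l, l')) (by
    rw [Prod.dist_eq]; exact max_lt hl.2 hl'.2) ⟨hl.1, hl'.1⟩
  refine le_trans (le_of_eq ?_) h9
  congr 1
  simp only [P, ContinuousLinearMap.comp_apply, Function.comp_apply,
    ContinuousLinearMap.id_apply, ContinuousLinearMap.smul_apply, ContinuousLinearMap.proj_apply,
    deriv_jac hhol hsm hζ, smul_eq_mul, ContinuousLinearMap.pi_apply, Finset.mul_sum, Ex,
    Pi.sub_apply]
  congr 1
  exact Finset.sum_congr rfl fun j _ => by ring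

lemma ext_rows {n : ℕ} (v : Fin n → Fin n → ℝ) (I : Finset (Fin n))
    (hv : LinearIndependent ℝ (fun i : I => v i)) :
    ∃ B : Matrix (Fin n) (Fin n) ℝ, IsUnit B ∧ ∀ i ∈ I, B i = v i := by
  classical
  let b := Module.Basis.sumExtend hv
  have hb : ∀ i : I, b (Sum.inl i) = v i := by
    intro i
    simp [b, Module.Basis.sumExtend]
    rfl
  let e0 := b.indexEquiv (Pi.basisFun ℝ (Fin n))
  have : Finite (↑I ⊕ ↑(Module.Basis.sumExtendIndex hv)) := Finite.of_equiv _ e0.symm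
  have : Finite (Module.Basis.sumExtendIndex hv) := Finite.of_injective (Sum.inr : _ → I ⊕ _) Sum.inr_injective
  have : Fintype (Module.Basis.sumExtendIndex hv) := Fintype.ofFinite _
  have hcard : Fintype.card (Module.Basis.sumExtendIndex hv) = Fintype.card {i // ¬ i ∈ I} := by
    have h1 := Fintype.card_congr e0
    rw [Fintype.card_sum] at h1
    have h2 := Fintype.card_congr (Equiv.sumCompl (fun i => i ∈ I))
    rw [Fintype.card_sum] at h2
    have h3 : Fintype.card I = Fintype.card {i // i ∈ I} := rfl
    omega
  let e1 := Fintype.equivOfCardEq hcard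
  let e : (↑I ⊕ ↑(Module.Basis.sumExtendIndex hv)) ≃ Fin n :=
    (Equiv.sumCongr (Equiv.refl _) e1).trans (Equiv.sumCompl (fun i => i ∈ I))
  let b' := b.reindex e
  refine ⟨Matrix.of fun i => b' i, ?_, ?_⟩
  · exact Matrix.linearIndependent_rows_iff_isUnit.1 b'.linearIndependent
  · intro i hi
    have : e.symm i = Sum.inl ⟨i, hi⟩ := by
      rw [Equiv.symm_apply_eq]; simp [e]
    change b' i = _
    simp only [b', Module.Basis.reindex_apply, this]
    exact hb ⟨i, hi⟩

lemma exists_perm {n : ℕ} {B : Matrix (Fin n) (Fin n) ℝ} (hB : IsUnit B) :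
    ∃ σ : Equiv.Perm (Fin n), ∀ i, B i (σ i) ≠ 0 := by
  have hd : B.det ≠ 0 := ((Matrix.isUnit_iff_isUnit_det B).1 hB).ne_zero
  rw [Matrix.det_apply] at hd
  obtain ⟨σ, _, hσ⟩ := Finset.exists_ne_zero_of_sum_ne_zero hd
  refine ⟨σ.symm, fun i h => hσ ?_⟩
  have : ∏ i, B (σ i) i = 0 := Finset.prod_eq_zero (Finset.mem_univ (σ.symm i)) (by simpa using h)
  simp [this]

lemma antilip_mat {n : ℕ} {B : Matrix (Fin n) (Fin n) ℝ} (hB : IsUnit B) :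
    ∃ K : NNReal, 0 < K ∧ ∀ v, ‖v‖ ≤ K * ‖B.mulVec v‖ := by
  have hinj : Function.Injective B.mulVecLin := by
    exact Matrix.mulVec_injective_iff_isUnit.2 hB
  obtain ⟨K, hK, h⟩ := (LinearMap.injective_iff_antilipschitz (𝕜 := ℝ) _).1 hinj
  refine ⟨K, hK, fun v => ?_⟩
  have := h.le_mul_dist v 0
  simpa using this

lemma log_re_nonpos {w : ℂ} (hw : ‖w‖ ≤ 1) : (Complex.log w).re ≤ 0 := by
  rw [Complex.log_re]; exact Real.log_nonpos (norm_nonneg _) hw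

lemma a_nonneg {n : ℕ} {Φ : (Fin n → ℂ) → (Fin n → ℂ)}
    (hhol : DifferentiableOn ℂ Φ (polydisc n))
    (hsm : ContDiffOn ℝ 1 Φ (closedPolydisc n))
    (hmap : ∀ z ∈ polydisc n, Φ z ∈ polydisc n)
    (l₀ : Fin n → ℂ) (hl₀ : ∀ j, (l₀ j).re = 0) (i j : Fin n)
    {ω : ℂ} (hω : Φ (Ex l₀) i = ω) (hω1 : ‖ω‖ = 1) :
    (ω⁻¹ * jacEntry n Φ (Ex l₀) i j * Ex l₀ j).im = 0 ∧
    0 ≤ (ω⁻¹ * jacEntry n Φ (Ex l₀) i j * Ex l₀ j).re := by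
  have hω0 : ω ≠ 0 := by rintro rfl; simp at hω1
  have hH : l₀ ∈ HP n := fun j => (hl₀ j).le
  set a := ω⁻¹ * jacEntry n Φ (Ex l₀) i j * Ex l₀ j with ha
  have key : ∀ v : ℂ, v.re ≤ 0 → (a * v).re ≤ 0 := by
    intro v hv
    by_contra hm
    push Not at hm
    set m := (a * v).re
    have hv0 := norm_nonneg v
    obtain ⟨ρ, hρ, h⟩ := strictN hhol hsm l₀ hH i hω hω0 (κ := m / (2 * (‖v‖ + 1))) (by positivity)
    set r := ρ / (2 * (‖v‖ + 1)) with hr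
    have hr0 : 0 < r := by positivity
    have hrv : r * ‖v‖ < ρ := by
      rw [hr, div_mul_eq_mul_div, div_lt_iff₀ (by positivity)]; nlinarith
    set l : Fin n → ℂ := l₀ + Pi.single j (r * v) with hl
    have hll : l - l₀ = Pi.single j (r * v) := by simp [hl]
    have hn : ‖l - l₀‖ = r * ‖v‖ := by
      rw [hll, Pi.norm_single, norm_mul, Complex.norm_real, Real.norm_of_nonneg hr0.le]
    have h1 := h l ⟨fun k => ?_, ?_⟩ l₀ ⟨hH, mem_ball_self hρ⟩
    rotate_left
    · simp only [hl, Pi.add_apply, Complex.add_re, hl₀, zero_add]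
      by_cases hk : k = j
      · subst hk; simp; nlinarith
      · simp [hk]
    · rw [mem_ball, dist_eq_norm, hn]; exact hrv
    rw [hn, hω, inv_mul_cancel₀ hω0, Complex.log_one, sub_zero] at h1
    have h2 : ∑ k, (ω⁻¹ * jacEntry n Φ (Ex l₀) i k * Ex l₀ k) * (l k - l₀ k) = a * (r * v) := by
      rw [Finset.sum_eq_single j]
      · rw [← ha]; congr 1; simp [hl]
      · intro k _ hk; simp [hl, hk]
      · simp
    rw [h2] at h1
    have hlH : l ∈ HP n := by
      intro k
      simp only [hl, Pi.add_apply, Complex.add_re, hl₀, zero_add]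
      by_cases hk : k = j
      · subst hk; simp; nlinarith
      · simp [hk]
    have h3 := log_re_nonpos (w := ω⁻¹ * Φ (Ex l) i) (by
      rw [norm_mul, norm_inv, hω1]; simpa using Phi_cp hsm hmap (Ex_cp hlH) i)
    have h4 := (Complex.abs_re_le_norm _).trans h1
    rw [Complex.sub_re] at h4
    have h5 : (a * (r * v)).re = r * m := by
      rw [show a * (r * v) = r * (a * v) by ring, Complex.re_ofReal_mul]
    rw [h5] at h4
    have h6 := (abs_le.1 h4).1
    have h7 : m / (2 * (‖v‖ + 1)) * (r * ‖v‖) ≤ r * m / 2 := by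
      rw [div_mul_eq_mul_div, div_le_div_iff₀ (by positivity) (by positivity)]
      nlinarith [mul_pos hm hr0]
    nlinarith [mul_pos hm hr0]
  have k1 := key Complex.I (by simp)
  have k2 := key (-Complex.I) (by simp)
  have k3 := key (-1) (by simp)
  simp at k1 k2 k3
  exact ⟨le_antisymm k2 k1, k3⟩

lemma mat_data {n : ℕ} {Φ : (Fin n → ℂ) → (Fin n → ℂ)}
    (hhol : DifferentiableOn ℂ Φ (polydisc n))
    (hsm : ContDiffOn ℝ 1 Φ (closedPolydisc n))
    (hmap : ∀ z ∈ polydisc n, Φ z ∈ polydisc n) (hrank : rankCond n Φ)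
    (l₀ : Fin n → ℂ) (hl₀ : ∀ j, (l₀ j).re = 0) (I : Finset (Fin n))
    (hI : ∀ i ∈ I, ‖Φ (Ex l₀) i‖ = 1) :
    ∃ B : Matrix (Fin n) (Fin n) ℝ, IsUnit B ∧ (∀ i ∈ I, ∀ j, 0 ≤ B i j) ∧
      (∀ i ∈ I, ∀ j, (Φ (Ex l₀) i)⁻¹ * jacEntry n Φ (Ex l₀) i j * Ex l₀ j = (B i j : ℂ)) := by
  have hreal : ∀ i ∈ I, ∀ j, (Φ (Ex l₀) i)⁻¹ * jacEntry n Φ (Ex l₀) i j * Ex l₀ j =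
      (((Φ (Ex l₀) i)⁻¹ * jacEntry n Φ (Ex l₀) i j * Ex l₀ j).re : ℂ) := by
    intro i hi j
    have := a_nonneg hhol hsm hmap l₀ hl₀ i j rfl (hI i hi)
    apply Complex.ext <;> simp [this.1]
  have hind : LinearIndependent ℝ (fun i : I => fun j =>
      ((Φ (Ex l₀) i)⁻¹ * jacEntry n Φ (Ex l₀) i j * Ex l₀ j).re) := by
    rcases I.eq_empty_or_nonempty with h0 | hne
    · subst h0; exact linearIndependent_empty_type
    have hr := hrank I hne (Ex l₀) (fun j => by simp [Ex, Complex.norm_exp, hl₀]) hI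
    rw [Matrix.rank_eq_finrank_span_row] at hr
    have hC : LinearIndependent ℂ (fun (i : I) (j : Fin n) => jacEntry n Φ (Ex l₀) i j) := by
      rw [linearIndependent_iff_card_eq_finrank_span, Fintype.card_coe, ← hr]
      rfl
    rw [Fintype.linearIndependent_iff] at hC ⊢
    intro g hg i
    have h1 := hC (fun i => g i * (Φ (Ex l₀) i)⁻¹) (by
      ext j
      have h2 := congrFun hg j
      simp only [Finset.sum_apply, Pi.smul_apply, smul_eq_mul, Pi.zero_apply] at h2 ⊢
      have h3 := congrArg (fun x : ℝ => (x : ℂ)) h2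
      simp only [Complex.ofReal_sum, Complex.ofReal_mul, Complex.ofReal_zero] at h3
      have hE : Ex l₀ j ≠ 0 := Complex.exp_ne_zero _
      apply mul_right_cancel₀ hE
      rw [zero_mul, Finset.sum_mul, ← h3]
      refine Finset.sum_congr rfl fun i _ => ?_
      rw [← hreal i i.2 j]; ring) i
    have h0 : (Φ (Ex l₀) i)⁻¹ ≠ 0 := by
      have := hI i i.2
      intro h; rw [inv_eq_zero] at h; rw [h] at this; simp at this
    simpa [h0] using h1
  obtain ⟨B, hB, hB2⟩ := ext_rows (fun i j =>
    ((Φ (Ex l₀) i)⁻¹ * jacEntry n Φ (Ex l₀) i j * Ex l₀ j).re) I hind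
  refine ⟨B, hB, fun i hi j => ?_, fun i hi j => ?_⟩
  · rw [hB2 i hi]; exact (a_nonneg hhol hsm hmap l₀ hl₀ i j rfl (hI i hi)).2
  · rw [hB2 i hi]; exact hreal i hi j

lemma fin_min {n : ℕ} {P : Fin n → ℝ → Prop} (hP : ∀ i, ∃ r > 0, ∀ x, 0 < x → x ≤ r → P i x) :
    ∃ r > 0, ∀ x, 0 < x → x ≤ r → ∀ i, P i x := by
  choose r hr h using hP
  rcases isEmpty_or_nonempty (Fin n) with he | he
  · exact ⟨1, one_pos, fun x _ _ i => he.elim i⟩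
  refine ⟨Finset.univ.inf' Finset.univ_nonempty r, ?_, fun x hx hx' i => h i x hx ?_⟩
  · exact (Finset.lt_inf'_iff _).2 fun i _ => hr i
  · exact hx'.trans (Finset.inf'_le _ (Finset.mem_univ i))

/-- logarithmic coordinates -/
def pt {n : ℕ} (τ θ : Fin n → ℝ) : Fin n → ℂ := fun j => τ j + θ j * Complex.I

lemma pt_mem {n : ℕ} {r : ℝ} {τ θ θ₀ : Fin n → ℝ} (hτ : ∀ j, τ j ∈ Icc (-(r / 2)) 0)
    (hr : 0 < r) (hθ : θ ∈ ball θ₀ (r / 4)) : pt τ θ ∈ HP n ∩ ball (pt 0 θ₀) r := by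
  refine ⟨fun j => by simpa [pt] using (hτ j).2, ?_⟩
  rw [mem_ball, dist_pi_lt_iff hr] at *
  intro j
  rw [dist_eq_norm]
  have h2 := (dist_pi_lt_iff (by positivity)).1 (mem_ball.1 hθ) j
  rw [Real.dist_eq] at h2
  have : pt τ θ j - pt 0 θ₀ j = (τ j : ℂ) + ((θ j - θ₀ j : ℝ) : ℂ) * Complex.I := by
    simp [pt]; ring
  rw [this]
  refine (norm_add_le _ _).trans_lt ?_
  rw [norm_mul, Complex.norm_I, Complex.norm_real, Complex.norm_real, Real.norm_eq_abs,
    Real.norm_eq_abs, abs_of_nonpos (hτ j).2]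
  have := (hτ j).1
  linarith

lemma log_bd {t r : ℝ} (ht0 : 0 < t) (ht : t < r / 4) (hr : r ≤ 2) :
    Real.log (1 - t) ∈ Icc (-(r / 2)) 0 ∧ Real.log (1 - t) ≤ -t := by
  have hp : 0 < 1 - t := by linarith
  have h1 := Real.log_le_sub_one_of_pos hp
  have h2 := Real.one_sub_inv_le_log_of_pos hp
  refine ⟨⟨?_, by linarith⟩, by linarith⟩
  have h3 : (1 - t)⁻¹ ≤ 1 + 2 * t := by
    rw [inv_le_iff_one_le_mul₀ hp]; nlinarith
  linarith

lemma Ex_pt {n : ℕ} {t θ : Fin n → ℝ} (ht : ∀ j, t j < 1) :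
    Ex (pt (fun j => Real.log (1 - t j)) θ) = fun j => ((1 - t j : ℝ) : ℂ) * ee (θ j) := by
  ext j
  simp only [Ex, pt, ee, Complex.exp_add]
  rw [← Complex.ofReal_exp, Real.exp_log (by linarith [ht j])]

lemma exp_le_lin {x : ℝ} (h0 : 0 ≤ x) (h1 : x ≤ 1) : Real.exp (-x) ≤ 1 - x / 2 := by
  rw [Real.exp_neg, inv_le_iff_one_le_mul₀ (Real.exp_pos x)]
  have := Real.add_one_le_exp x
  nlinarith

lemma dist_circ {R s x y : ℝ} (hR : 0 ≤ R) (hs : 1 / 2 ≤ s) :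
    ‖ee x - ee y‖ ≤ 4 * ‖(R : ℂ) * ee x - s * ee y‖ := by
  have h1 : |R - s| ≤ ‖(R : ℂ) * ee x - s * ee y‖ := by
    have := abs_norm_sub_norm_le ((R : ℂ) * ee x) (s * ee y)
    rwa [norm_mul, norm_mul, norm_ee, norm_ee, Complex.norm_real, Complex.norm_real,
      Real.norm_of_nonneg hR, Real.norm_of_nonneg (by linarith), mul_one, mul_one] at this
  have h2 : (s : ℂ) * (ee x - ee y) = -((R - s : ℝ) : ℂ) * ee x + ((R : ℂ) * ee x - s * ee y) := by
    push_cast; ring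
  have h3 : s * ‖ee x - ee y‖ ≤ |R - s| + ‖(R : ℂ) * ee x - s * ee y‖ := by
    calc s * ‖ee x - ee y‖ = ‖(s : ℂ) * (ee x - ee y)‖ := by
          rw [norm_mul, Complex.norm_real, Real.norm_of_nonneg (by linarith)]
      _ ≤ _ := by
          rw [h2]
          refine (norm_add_le _ _).trans ?_
          rw [norm_mul, norm_neg, norm_ee, Complex.norm_real, mul_one, Real.norm_eq_abs]
  nlinarith [norm_nonneg (ee x - ee y)]

lemma Bsum_le {n : ℕ} (B : Matrix (Fin n) (Fin n) ℝ) (i : Fin n) (v : Fin n → ℂ) :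
    ‖∑ j, (B i j : ℂ) * v j‖ ≤ (∑ i, ∑ j, |B i j|) * ‖v‖ := by
  calc ‖∑ j, (B i j : ℂ) * v j‖ ≤ ∑ j, |B i j| * ‖v‖ := by
        refine (norm_sum_le _ _).trans (Finset.sum_le_sum fun j _ => ?_)
        rw [norm_mul, Complex.norm_real, Real.norm_eq_abs]
        gcongr
        exact norm_le_pi_norm v j
    _ = (∑ j, |B i j|) * ‖v‖ := by rw [Finset.sum_mul]
    _ ≤ _ := by
        exact mul_le_mul_of_nonneg_right (Finset.single_le_sum (f := fun i => ∑ j, |B i j|)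
          (fun i _ => Finset.sum_nonneg fun j _ => abs_nonneg _) (Finset.mem_univ i)) (norm_nonneg v)

set_option maxHeartbeats 4000000 in
theorem LL {n : ℕ} {Φ : (Fin n → ℂ) → (Fin n → ℂ)}
    (hhol : DifferentiableOn ℂ Φ (polydisc n))
    (hsm : ContDiffOn ℝ 1 Φ (closedPolydisc n))
    (hmap : ∀ z ∈ polydisc n, Φ z ∈ polydisc n) (hrank : rankCond n Φ) (θ₀ : Fin n → ℝ) :
    ∃ ρ > 0, ∃ c > 0, c ≤ (1 / 4 : ℝ) ∧ ∃ Kc : NNReal, ∃ σ : Equiv.Perm (Fin n), ∃ ω : Fin n → ℂ,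
      ρ ≤ 1 / 2 ∧ (∀ i, ‖ω i‖ = 1) ∧ ∀ t : Fin n → ℝ, (∀ j, t j ∈ Ioo 0 ρ) →
      ∃ Ψ : (Fin n → ℝ) → (Fin n → ℝ), ContinuousOn Ψ (ball θ₀ ρ) ∧
        (∀ θ ∈ ball θ₀ ρ, ∀ θ' ∈ ball θ₀ ρ, dist θ θ' ≤ Kc * dist (Ψ θ) (Ψ θ')) ∧
        (∀ θ ∈ ball θ₀ ρ, ∀ i, Ψ θ i ∈ Ioo (-Real.pi) Real.pi) ∧
        (∀ θ ∈ ball θ₀ ρ, ∀ i, ‖Φ (fun j => ((1 - t j : ℝ) : ℂ) * ee (θ j)) i‖ ≤ 1 - 2 * c * t (σ i)) ∧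
        (∀ θ ∈ ball θ₀ ρ, ∀ i y, c * ‖ee (Ψ θ i) - ee y‖ ≤
          ‖Φ (fun j => ((1 - t j : ℝ) : ℂ) * ee (θ j)) i - ((1 - c * t (σ i) : ℝ) : ℂ) * ω i * ee y‖) := by
  classical
  set l₀ : Fin n → ℂ := pt 0 θ₀ with hl₀d
  have hl₀ : ∀ j, (l₀ j).re = 0 := fun j => by simp [hl₀d, pt]
  have hH₀ : l₀ ∈ HP n := fun j => (hl₀ j).le
  set I : Finset (Fin n) := Finset.univ.filter fun i => ‖Φ (Ex l₀) i‖ = 1 with hId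
  have hI : ∀ i ∈ I, ‖Φ (Ex l₀) i‖ = 1 := fun i hi => by simpa [hId] using hi
  have hIc : ∀ i, i ∉ I → ‖Φ (Ex l₀) i‖ < 1 := fun i hi =>
    lt_of_le_of_ne (Phi_cp hsm hmap (Ex_cp hH₀) i) (by simpa [hId] using hi)
  obtain ⟨B, hBu, hB0, hBa⟩ := mat_data hhol hsm hmap hrank l₀ hl₀ I hI
  obtain ⟨σ, hσ⟩ := exists_perm hBu
  obtain ⟨K₀, hK₀, hK⟩ := antilip_mat hBu
  set ω : Fin n → ℂ := fun i => if i ∈ I then Φ (Ex l₀) i else 1 with hωd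
  have hω : ∀ i, ‖ω i‖ = 1 := by
    intro i
    by_cases hi : i ∈ I
    · simp [hωd, hi, hI i hi]
    · simp [hωd, hi]
  have hω0 : ∀ i, ω i ≠ 0 := fun i h => by have := hω i; simp [h] at this
  -- alpha
  obtain ⟨α₀, hα₀, hα₁⟩ := fin_min (P := fun i x => x ≤ |B i (σ i)|) fun i =>
    ⟨|B i (σ i)|, abs_pos.2 (hσ i), fun x _ hx => hx⟩
  set α := min α₀ 1 with hαd
  have hα : 0 < α := lt_min hα₀ one_pos
  have hα1 : α ≤ 1 := min_le_right _ _
  have hαB : ∀ i ∈ I, α ≤ B i (σ i) := fun i hi => by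
    have := hα₁ α hα (min_le_left _ _) i
    rwa [abs_of_nonneg (hB0 i hi _)] at this
  -- eta
  obtain ⟨η₀, hη₀, hη₁⟩ := fin_min (P := fun i x => i ∉ I → x ≤ 1 - ‖Φ (Ex l₀) i‖) fun i => by
    by_cases hi : i ∈ I
    · exact ⟨1, one_pos, fun x _ _ h => absurd hi h⟩
    · exact ⟨1 - ‖Φ (Ex l₀) i‖, by linarith [hIc i hi], fun x _ hx _ => hx⟩
  set η := min η₀ 1 with hηd
  have hη : 0 < η := lt_min hη₀ one_pos
  have hη1 : η ≤ 1 := min_le_right _ _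
  have hηB : ∀ i, i ∉ I → ‖Φ (Ex l₀) i‖ ≤ 1 - η := fun i hi => by
    linarith [hη₁ η hη (min_le_left _ _) i hi]
  have hK₀' : (0:ℝ) < K₀ := hK₀
  set κ := min (α / 2) (1 / (2 * K₀)) with hκd
  have hκ : 0 < κ := lt_min (by positivity) (by positivity)
  have hκα : κ ≤ α / 2 := min_le_left _ _
  have hκK : K₀ * κ ≤ 1 / 2 := by
    have : κ ≤ 1 / (2 * K₀) := min_le_right _ _
    rw [le_div_iff₀ (by positivity)] at this
    linarith
  set N : Fin n → (Fin n → ℂ) → ℂ := fun i l => if i ∈ I then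
    Complex.log ((ω i)⁻¹ * Φ (Ex l) i) else ∑ j, (B i j : ℂ) * (l j - l₀ j) with hNd
  have hE : ∀ i, ∃ r > 0, ∀ x, 0 < x → x ≤ r → ∀ l ∈ HP n ∩ ball l₀ x, ∀ l' ∈ HP n ∩ ball l₀ x,
      ‖N i l - N i l' - ∑ j, (B i j : ℂ) * (l j - l' j)‖ ≤ κ * ‖l - l'‖ := by
    intro i
    by_cases hi : i ∈ I
    · obtain ⟨r, hr, h⟩ := strictN hhol hsm l₀ hH₀ i rfl (norm_ne_zero_iff.1 (by
        rw [hI i hi]; exact one_ne_zero)) hκ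
      refine ⟨r, hr, fun x _ hx l hl l' hl' => ?_⟩
      have := h l ⟨hl.1, ball_subset_ball hx hl.2⟩ l' ⟨hl'.1, ball_subset_ball hx hl'.2⟩
      simp only [hBa i hi] at this
      simpa [hNd, hωd, hi] using this
    · refine ⟨1, one_pos, fun x _ _ l _ l' _ => ?_⟩
      have : N i l - N i l' - ∑ j, (B i j : ℂ) * (l j - l' j) = 0 := by
        simp only [hNd, hi, if_false]
        rw [← Finset.sum_sub_distrib, ← Finset.sum_sub_distrib]
        exact Finset.sum_eq_zero fun j _ => by ring
      rw [this, norm_zero]; positivity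
  have hF : ∀ i, ∃ r > 0, ∀ x, 0 < x → x ≤ r → ∀ l ∈ HP n ∩ ball l₀ x,
      ‖Φ (Ex l) i - Φ (Ex l₀) i‖ < η / 2 := by
    intro i
    have hcE : Continuous (Ex (n := n)) := by unfold Ex; fun_prop
    have hc : ContinuousWithinAt (fun l => Φ (Ex l) i) (HP n) l₀ :=
      (continuous_apply i).continuousAt.comp_continuousWithinAt
        ((hsm.continuousOn _ (Ex_cp hH₀)).comp hcE.continuousWithinAt fun l hl => Ex_cp hl)
    obtain ⟨r, hr, h⟩ := Metric.continuousWithinAt_iff.1 hc (η / 2) (by positivity)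
    refine ⟨r, hr, fun x _ hx l hl => ?_⟩
    rw [← dist_eq_norm]
    exact h hl.1 (lt_of_lt_of_le hl.2 hx)
  obtain ⟨r1, hr1, hE'⟩ := fin_min hE
  obtain ⟨r2, hr2, hF'⟩ := fin_min hF
  set S := κ + ∑ i, ∑ j, |B i j| with hSd
  have hS : 0 < S := add_pos_of_pos_of_nonneg hκ
    (Finset.sum_nonneg fun i _ => Finset.sum_nonneg fun j _ => abs_nonneg _)
  set r := min (min r1 r2) (min 2 (1 / S)) with hrd
  have hr : 0 < r := by
    refine lt_min (lt_min hr1 hr2) (lt_min two_pos (by positivity))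
  have hr2' : r ≤ 2 := (min_le_right _ _).trans (min_le_left _ _)
  have hrS : S * r ≤ 1 := by
    have : r ≤ 1 / S := (min_le_right _ _).trans (min_le_right _ _)
    rw [le_div_iff₀ hS] at this
    linarith
  have hEr := hE' r hr ((min_le_left _ _).trans (min_le_left _ _))
  have hFr := hF' r hr ((min_le_left _ _).trans (min_le_right _ _))
  clear hE hF hE' hF'
  have hLip : ∀ i, ∀ l ∈ HP n ∩ ball l₀ r, ∀ l' ∈ HP n ∩ ball l₀ r, ‖N i l - N i l'‖ ≤ S * ‖l - l'‖ := by
    intro i l hl l' hl'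
    have h1 := hEr i l hl l' hl'
    have h2 := Bsum_le B i (l - l')
    calc ‖N i l - N i l'‖ = ‖(N i l - N i l' - ∑ j, (B i j : ℂ) * (l j - l' j)) +
          ∑ j, (B i j : ℂ) * ((l - l') j)‖ := by congr 1; simp
      _ ≤ _ := (norm_add_le _ _).trans (add_le_add h1 h2)
      _ = _ := by rw [hSd]; ring
  have hN0 : ∀ i, N i l₀ = 0 := by
    intro i
    by_cases hi : i ∈ I
    · have : Φ (Ex l₀) i ≠ 0 := by
        have := hI i hi
        intro h; rw [h] at this; simp at this
      simp [hNd, hωd, hi, this]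
    · simp [hNd, hi]
  have hN1 : ∀ i, ∀ l ∈ HP n ∩ ball l₀ r, ‖N i l‖ < 1 := by
    intro i l hl
    have h1 := hLip i l hl l₀ ⟨hH₀, mem_ball_self hr⟩
    rw [hN0, sub_zero, ← dist_eq_norm] at h1
    have h2 : dist l l₀ < r := hl.2
    nlinarith
  set ρ := r / 4 with hρd
  set c := min (α / 8) (η / 6) with hcd
  have hc0 : 0 < c := lt_min (by positivity) (by positivity)
  have hcα : c ≤ α / 8 := min_le_left _ _
  have hcη : c ≤ η / 6 := min_le_right _ _
  refine ⟨ρ, by positivity, c, hc0, by linarith, 2 * K₀, σ, ω, by linarith, hω, fun t ht => ?_⟩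
  set τ : Fin n → ℝ := fun j => Real.log (1 - t j) with hτd
  have hτ : ∀ j, τ j ∈ Icc (-(r / 2)) 0 := fun j => (log_bd (ht j).1 (ht j).2 hr2').1
  have hτt : ∀ j, τ j ≤ - t j := fun j => (log_bd (ht j).1 (ht j).2 hr2').2
  have ht1 : ∀ j, t j < 1 / 2 + 1 / 4 := fun j => by linarith [(ht j).2]
  have hmem : ∀ θ ∈ ball θ₀ ρ, pt τ θ ∈ HP n ∩ ball l₀ r := fun θ hθ => pt_mem hτ hr hθ
  have hpd : ∀ θ θ' : Fin n → ℝ, ‖pt τ θ - pt τ θ'‖ ≤ ‖θ - θ'‖ := by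
    intro θ θ'
    rw [pi_norm_le_iff_of_nonneg (norm_nonneg _)]
    intro j
    have : (pt τ θ - pt τ θ') j = (((θ - θ') j : ℝ) : ℂ) * Complex.I := by
      simp [pt]; ring
    rw [this, norm_mul, Complex.norm_I, mul_one, Complex.norm_real]
    exact norm_le_pi_norm (θ - θ') j
  have hEx : ∀ θ : Fin n → ℝ, (fun j => ((1 - t j : ℝ) : ℂ) * ee (θ j)) = Ex (pt τ θ) := fun θ =>
    (Ex_pt (fun j => by linarith [ht1 j])).symm
  refine ⟨fun θ i => (N i (pt τ θ)).im, ?_, ?_, ?_, ?_, ?_⟩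
  · rw [continuousOn_pi]
    intro i
    have : LipschitzOnWith (Real.toNNReal S) (fun θ => (N i (pt τ θ)).im) (ball θ₀ ρ) := by
      refine LipschitzOnWith.of_dist_le_mul fun θ hθ θ' hθ' => ?_
      rw [Real.coe_toNNReal _ hS.le, Real.dist_eq, ← Complex.sub_im, dist_eq_norm]
      refine (Complex.abs_im_le_norm _).trans ((hLip i _ (hmem θ hθ) _ (hmem θ' hθ')).trans ?_)
      gcongr
      exact hpd θ θ'
    exact this.continuousOn
  · intro θ hθ θ' hθ'
    rw [dist_eq_norm, dist_eq_norm]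
    set Ψ : (Fin n → ℝ) → (Fin n → ℝ) := fun θ i => (N i (pt τ θ)).im with hΨ
    change ‖θ - θ'‖ ≤ _ * ‖Ψ θ - Ψ θ'‖
    have h1 : ‖Ψ θ - Ψ θ' - B.mulVec (θ - θ')‖ ≤ κ * ‖θ - θ'‖ := by
      rw [pi_norm_le_iff_of_nonneg (by positivity)]
      intro i
      have h2 := hEr i _ (hmem θ hθ) _ (hmem θ' hθ')
      have h3 : (Ψ θ - Ψ θ' - B.mulVec (θ - θ')) i =
        (N i (pt τ θ) - N i (pt τ θ') - ∑ j, (B i j : ℂ) * (pt τ θ j - pt τ θ' j)).im := by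
        simp [hΨ, Matrix.mulVec, dotProduct, pt]
      rw [h3]
      refine (Complex.abs_im_le_norm _).trans (h2.trans ?_)
      gcongr
      exact hpd θ θ'
    have h4 : ‖B.mulVec (θ - θ')‖ ≤ ‖Ψ θ - Ψ θ'‖ + κ * ‖θ - θ'‖ := by
      have h5 : B.mulVec (θ - θ') = (Ψ θ - Ψ θ') - (Ψ θ - Ψ θ' - B.mulVec (θ - θ')) := by abel
      rw [h5]
      exact (norm_sub_le _ _).trans (by gcongr)
    have h6 := hK (θ - θ')
    have h7 : (K₀:ℝ) * ‖B.mulVec (θ - θ')‖ ≤ K₀ * (‖Ψ θ - Ψ θ'‖ + κ * ‖θ - θ'‖) := by gcongr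
    have h8 : (K₀ * κ) * ‖θ - θ'‖ ≤ 1 / 2 * ‖θ - θ'‖ := by gcongr
    push_cast
    nlinarith
  · intro θ hθ i
    have h1 := (Complex.abs_im_le_norm _).trans_lt (hN1 i _ (hmem θ hθ))
    have h2 := abs_lt.1 h1
    have := Real.pi_gt_three
    exact ⟨by linarith, by linarith⟩
  · intro θ hθ i
    rw [hEx θ]
    have hl := hmem θ hθ
    by_cases hi : i ∈ I
    · have hne : (ω i)⁻¹ * Φ (Ex (pt τ θ)) i ≠ 0 := by
        refine mul_ne_zero (inv_ne_zero (hω0 i)) fun h => ?_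
        have := hFr _ hl (i := i)
        rw [h, zero_sub, norm_neg, hI i hi] at this
        linarith
      have hNi : N i (pt τ θ) = Complex.log ((ω i)⁻¹ * Φ (Ex (pt τ θ)) i) := by simp [hNd, hi]
      set τ' := Function.update τ (σ i) 0 with hτ'd
      have hτ' : ∀ j, τ' j ∈ Icc (-(r / 2)) 0 := by
        intro j
        by_cases hj : j = σ i
        · subst hj; simp [hτ'd]; positivity
        · simpa [hτ'd, hj] using hτ j
      have hl' : pt τ' θ ∈ HP n ∩ ball l₀ r := pt_mem hτ' hr hθ
      have hNi' : (N i (pt τ' θ)).re ≤ 0 := by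
        have e : N i (pt τ' θ) = Complex.log ((ω i)⁻¹ * Φ (Ex (pt τ' θ)) i) := by simp [hNd, hi]
        rw [e]
        refine log_re_nonpos ?_
        rw [norm_mul, norm_inv, hω]
        simpa using Phi_cp hsm hmap (Ex_cp hl'.1) i
      have h1 := hEr i _ hl _ hl'
      have hdiff : pt τ θ - pt τ' θ = Pi.single (σ i) ((τ (σ i) : ℝ) : ℂ) := by
        ext j
        by_cases hj : j = σ i
        · subst hj; simp [pt, hτ'd]
        · simp [pt, hτ'd, hj]
      have hsum : ∑ j, (B i j : ℂ) * (pt τ θ j - pt τ' θ j) = ((B i (σ i) * τ (σ i) : ℝ) : ℂ) := by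
        have : ∀ j, pt τ θ j - pt τ' θ j = (pt τ θ - pt τ' θ) j := fun j => rfl
        simp only [this, hdiff]
        rw [Finset.sum_eq_single (σ i)]
        · simp
        · intro j _ hj; simp [hj]
        · simp
      rw [hsum, hdiff, Pi.norm_single, Complex.norm_real, Real.norm_eq_abs,
        abs_of_nonpos (hτ _).2] at h1
      have h2 := (abs_le.1 ((Complex.abs_re_le_norm _).trans h1)).2
      simp only [Complex.sub_re, Complex.ofReal_re] at h2
      have h3 : (N i (pt τ θ)).re ≤ -(α / 2 * t (σ i)) := by
        have h4 := hτt (σ i)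
        have h5 := (ht (σ i)).1
        have h6 := hαB i hi
        have h7 : (B i (σ i) - κ) * τ (σ i) ≤ (α / 2) * τ (σ i) := by
          apply mul_le_mul_of_nonpos_right _ (hτ _).2
          linarith
        nlinarith
      have h8 : ‖Φ (Ex (pt τ θ)) i‖ = Real.exp ((N i (pt τ θ)).re) := by
        rw [hNi, ← Complex.norm_exp, Complex.exp_log hne, norm_mul, norm_inv, hω]; simp
      rw [h8]
      have h9 := (ht (σ i)).1
      have h10 := ht1 (σ i)
      refine (Real.exp_le_exp.2 h3).trans ((exp_le_lin (by positivity) (by nlinarith)).trans ?_)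
      nlinarith
    · have h1 := hFr _ hl (i := i)
      have h2 := hηB i hi
      have h3 : ‖Φ (Ex (pt τ θ)) i‖ ≤ 1 - η / 2 := by
        have := norm_sub_norm_le (Φ (Ex (pt τ θ)) i) (Φ (Ex l₀) i)
        linarith
      have h9 := (ht (σ i)).1
      have h10 := ht1 (σ i)
      nlinarith
  · intro θ hθ i y
    rw [hEx θ]
    have hl := hmem θ hθ
    have h9 := (ht (σ i)).1
    have h10 := ht1 (σ i)
    by_cases hi : i ∈ I
    · have hne : (ω i)⁻¹ * Φ (Ex (pt τ θ)) i ≠ 0 := by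
        refine mul_ne_zero (inv_ne_zero (hω0 i)) fun h => ?_
        have := hFr _ hl (i := i)
        rw [h, zero_sub, norm_neg, hI i hi] at this
        linarith
      have hNi : N i (pt τ θ) = Complex.log ((ω i)⁻¹ * Φ (Ex (pt τ θ)) i) := by simp [hNd, hi]
      set R := Real.exp ((N i (pt τ θ)).re) with hR
      have h1 : Φ (Ex (pt τ θ)) i = ω i * (R * ee ((N i (pt τ θ)).im)) := by
        have h2 : (R : ℂ) * ee ((N i (pt τ θ)).im) = Complex.exp (N i (pt τ θ)) := by
          rw [hR, ee, Complex.ofReal_exp, ← Complex.exp_add, Complex.re_add_im]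
        rw [h2, hNi, Complex.exp_log hne, mul_inv_cancel_left₀ (hω0 i)]
      have h3 := dist_circ (R := R) (s := 1 - c * t (σ i)) (x := (N i (pt τ θ)).im) (y := y)
        (Real.exp_pos _).le (by nlinarith)
      rw [h1, show ω i * (R * ee ((N i (pt τ θ)).im)) - ((1 - c * t (σ i) : ℝ) : ℂ) * ω i * ee y =
        ω i * (R * ee ((N i (pt τ θ)).im) - ((1 - c * t (σ i) : ℝ) : ℂ) * ee y) by ring, norm_mul,
        hω, one_mul]
      have h4 := norm_nonneg (ee ((N i (pt τ θ)).im) - ee y)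
      nlinarith
    · have h1 := hFr _ hl (i := i)
      have h2 := hηB i hi
      have h3 : ‖Φ (Ex (pt τ θ)) i‖ ≤ 1 - η / 2 := by
        have := norm_sub_norm_le (Φ (Ex (pt τ θ)) i) (Φ (Ex l₀) i)
        linarith
      have h4 : ‖ee ((N i (pt τ θ)).im) - ee y‖ ≤ 2 := by
        refine (norm_sub_le _ _).trans ?_
        rw [norm_ee, norm_ee]; norm_num
      have h5 : (1 - c * t (σ i)) - ‖Φ (Ex (pt τ θ)) i‖ ≤
          ‖Φ (Ex (pt τ θ)) i - ((1 - c * t (σ i) : ℝ) : ℂ) * ω i * ee y‖ := by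
        rw [norm_sub_rev]
        refine le_trans (le_of_eq ?_) (norm_sub_norm_le _ _)
        rw [norm_mul, norm_mul, hω, norm_ee, Complex.norm_real, Real.norm_of_nonneg (by nlinarith)]
        ring
      nlinarith

def Wt {n : ℕ} (β : ℝ) (r : Fin n → ℝ) : ℝ≥0∞ :=
  (∏ i, ENNReal.ofReal (r i)) * ENNReal.ofReal (∏ j, ((β + 1) * (1 - |r j| ^ 2) ^ β / Real.pi))

lemma meas_Wt {n : ℕ} (β : ℝ) : Measurable (Wt (n := n) β) := by
  unfold Wt; fun_prop

lemma Wt_mono {n : ℕ} {β : ℝ} (hβ : β ∈ Ioo (-1:ℝ) 0) {r s : Fin n → ℝ} (hr : ∀ i, 0 < r i)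
    (hrs : ∀ i, r i ≤ s i) (hs : ∀ i, s i < 1) : Wt β r ≤ Wt β s := by
  unfold Wt
  refine mul_le_mul' (Finset.prod_le_prod' fun i _ => ENNReal.ofReal_le_ofReal (hrs i)) ?_
  refine ENNReal.ofReal_le_ofReal (Finset.prod_le_prod (fun i _ => ?_) fun i _ => ?_)
  · have h1 : 0 < 1 - |r i| ^ 2 := by
      rw [sq_abs]; nlinarith [hr i, hrs i, hs i]
    have := hβ.1
    have h2 : 0 < β + 1 := by linarith
    have := Real.pi_pos
    positivity
  · have h1 : 0 < 1 - |s i| ^ 2 := by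
      rw [sq_abs]; nlinarith [hr i, hrs i, hs i]
    have h3 : 1 - |s i| ^ 2 ≤ 1 - |r i| ^ 2 := by
      rw [sq_abs, sq_abs]; nlinarith [hr i, hrs i, hs i]
    have h4 := Real.rpow_le_rpow_of_nonpos h1 h3 hβ.2.le
    have h2 : 0 < β + 1 := by linarith [hβ.1]
    have := Real.pi_pos
    gcongr

/-- mean over the torus of polyradius `s` -/
def TM {n : ℕ} (G : (Fin n → ℂ) → ℝ≥0∞) (s : Fin n → ℝ) : ℝ≥0∞ :=
  ∫⁻ y, G (fun i => (s i : ℂ) * ee (y i)) ∂(tm n)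

instance {n : ℕ} : IsFiniteMeasure (tm n) := by unfold tm; infer_instance

lemma meas_TM {n : ℕ} {G : (Fin n → ℂ) → ℝ≥0∞} (hG : Measurable G) : Measurable (TM G) := by
  unfold TM
  have := cont_ee
  have h2 : Measurable fun p : (Fin n → ℝ) × (Fin n → ℝ) => G (fun i => (p.1 i : ℂ) * ee (p.2 i)) :=
    hG.comp (by fun_prop)
  exact h2.lintegral_prod_right'

lemma polar_V {n : ℕ} {β : ℝ} {G : (Fin n → ℂ) → ℝ≥0∞} (hG : Measurable G) :
    ∫⁻ z, G z ∂(Vbeta n β) = ∫⁻ r in (univ.pi fun _ => Ioo (0:ℝ) 1), Wt β r * TM G r := by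
  have hd : Measurable (fun z : Fin n → ℂ =>
    ENNReal.ofReal (∏ j, ((β + 1) * (1 - ‖z j‖ ^ 2) ^ β / Real.pi))) := by fun_prop
  have hcee := cont_ee
  unfold Vbeta
  rw [lintegral_withDensity_eq_lintegral_mul _ hd hG,
    ← lintegral_indicator (isOpen_polydisc n).measurableSet,
    ← Complex.lintegral_comp_pi_polarCoord_symm]
  set H := (polydisc n).indicator ((fun z : Fin n → ℂ =>
    ENNReal.ofReal (∏ j, ((β + 1) * (1 - ‖z j‖ ^ 2) ^ β / Real.pi))) * G) with hHd
  have hH : Measurable H := (hd.mul hG).indicator (isOpen_polydisc n).measurableSet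
  have e1 : (univ.pi fun _ : Fin n => Complex.polarCoord.target) =
      (MeasurableEquiv.arrowProdEquivProdArrow ℝ ℝ (Fin n)) ⁻¹'
        ((univ.pi fun _ => Ioi (0:ℝ)) ×ˢ (univ.pi fun _ => Ioo (-Real.pi) Real.pi)) := by
    ext p
    simp only [Complex.polarCoord_target, MeasurableEquiv.arrowProdEquivProdArrow,
      mem_preimage, mem_prod, mem_univ_pi]
    exact forall_and
  have e2 := (volume_measurePreserving_arrowProdEquivProdArrow ℝ ℝ (Fin n)).setLIntegral_comp_preimage_emb
    (MeasurableEquiv.measurableEmbedding _)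
    (fun q : (Fin n → ℝ) × (Fin n → ℝ) => (∏ i, ENNReal.ofReal (q.1 i)) * H (fun i => (q.1 i : ℂ) * ee (q.2 i)))
    ((univ.pi fun _ => Ioi (0:ℝ)) ×ˢ (univ.pi fun _ => Ioo (-Real.pi) Real.pi))
  rw [← e1] at e2
  have e3 : ∀ p : Fin n → ℝ × ℝ, (fun i => Complex.polarCoord.symm (p i)) =
      fun i => ((p i).1 : ℂ) * ee ((p i).2) := by
    intro p; ext i
    rw [Complex.polarCoord_symm_apply, ee, Complex.exp_mul_I]
    push_cast; rfl
  simp only [e3]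
  refine Eq.trans e2 ?_
  have hm : Measurable (fun q : (Fin n → ℝ) × (Fin n → ℝ) =>
      (∏ i, ENNReal.ofReal (q.1 i)) * H (fun i => (q.1 i : ℂ) * ee (q.2 i))) := by
    refine Measurable.mul (by fun_prop) (hH.comp (by fun_prop))
  rw [Measure.volume_eq_prod, ← Measure.prod_restrict, lintegral_prod _ hm.aemeasurable, ← tm_eq]
  rw [← lintegral_indicator (MeasurableSet.univ_pi fun _ => measurableSet_Ioi), ← lintegral_indicator (MeasurableSet.univ_pi fun _ => measurableSet_Ioo)]
  refine lintegral_congr fun r => ?_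
  by_cases h0 : ∀ i, 0 < r i
  swap
  · rw [indicator_of_notMem (by simpa using h0), indicator_of_notMem]
    intro h; exact h0 fun i => (h i (mem_univ i)).1
  rw [indicator_of_mem (by simpa using h0)]
  have hn : ∀ (y : Fin n → ℝ) i, ‖(r i : ℂ) * ee (y i)‖ = |r i| := fun y i => by
    rw [norm_mul, norm_ee, mul_one, Complex.norm_real, Real.norm_eq_abs]
  by_cases h1 : ∀ i, r i < 1
  · rw [indicator_of_mem (by exact fun i _ => ⟨h0 i, h1 i⟩)]
    unfold TM Wt
    have hGm : Measurable fun y : Fin n → ℝ => G (fun i => (r i : ℂ) * ee (y i)) :=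
      hG.comp (by fun_prop)
    rw [← lintegral_const_mul _ hGm]
    refine lintegral_congr fun y => ?_
    have : (fun i => (r i : ℂ) * ee (y i)) ∈ polydisc n := fun i => by
      simp only [hn, abs_of_pos (h0 i), h1 i]
    simp only [hHd]
    rw [indicator_of_mem this, Pi.mul_apply, mul_assoc]
    simp only [hn]
  · rw [indicator_of_notMem (by intro h; exact h1 fun i => (h i (mem_univ i)).2)]
    refine (lintegral_congr fun y => ?_).trans lintegral_zero
    have : (fun i => (r i : ℂ) * ee (y i)) ∉ polydisc n := fun h => h1 fun i => by
      have := h i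
      simpa only [hn, abs_of_pos (h0 i)] using this
    simp only [hHd]
    rw [indicator_of_notMem this, mul_zero]

lemma vol_perm {n : ℕ} (σ : Equiv.Perm (Fin n)) :
    MeasurePreserving (fun (r : Fin n → ℝ) i => r (σ i)) := by
  have := volume_measurePreserving_piCongrLeft (fun _ : Fin n => ℝ) σ.symm
  suffices he : (fun (r : Fin n → ℝ) i => r (σ i)) =
      MeasurableEquiv.piCongrLeft (fun _ : Fin n => ℝ) σ.symm by
    rw [he]; exact this
  funext r i
  obtain ⟨j, rfl⟩ := σ.symm.surjective i
  simp only [MeasurableEquiv.coe_piCongrLeft, Equiv.piCongrLeft_apply_apply, Equiv.apply_symm_apply]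

lemma lint_affine {n : ℕ} (σ : Equiv.Perm (Fin n)) {c : ℝ} (hc : 0 < c) {H : (Fin n → ℝ) → ℝ≥0∞}
    (hH : Measurable H) : ∫⁻ r : Fin n → ℝ, H (fun i => 1 - c * (1 - r (σ i))) =
      ENNReal.ofReal (c⁻¹ ^ n) * ∫⁻ r, H r := by
  have h1 := (vol_perm σ).lintegral_comp
    (f := fun r => H (fun i => 1 - c * (1 - r i))) (hH.comp (by fun_prop))
  rw [h1]
  have h2 := Measure.map_addHaar_smul (volume : Measure (Fin n → ℝ)) hc.ne'
  have h3 : ∫⁻ r, H (fun i => (1 - c) + r i) ∂(Measure.map (c • ·) (volume : Measure (Fin n → ℝ))) =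
      ∫⁻ r : Fin n → ℝ, H (fun i => 1 - c * (1 - r i)) := by
    rw [lintegral_map (f := fun r : Fin n → ℝ => H (fun i => (1 - c) + r i))
      (g := fun r : Fin n → ℝ => c • r) (hH.comp (by fun_prop)) (by fun_prop)]
    refine lintegral_congr fun r => ?_
    congr 1; ext i; simp; ring
  rw [← h3, h2, lintegral_smul_measure]
  have h4 := lintegral_add_left_eq_self (μ := (volume : Measure (Fin n → ℝ))) H (fun _ => 1 - c)
  rw [← h4, smul_eq_mul]
  congr 2
  simp [abs_of_pos hc]

lemma change_r {n : ℕ} {β : ℝ} (hβ : β ∈ Ioo (-1:ℝ) 0) (σ : Equiv.Perm (Fin n)) {c : ℝ} (hc : 0 < c)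
    (hc1 : c ≤ 1) {g : (Fin n → ℝ) → ℝ≥0∞} (hg : Measurable g) :
    ∫⁻ r in (univ.pi fun _ => Ioo (0:ℝ) 1), Wt β r * g (fun i => 1 - c * (1 - r (σ i))) ≤
      ENNReal.ofReal (c⁻¹ ^ n) * ∫⁻ r in (univ.pi fun _ => Ioo (0:ℝ) 1), Wt β r * g r := by
  have hms : MeasurableSet (univ.pi fun _ : Fin n => Ioo (0:ℝ) 1) :=
    MeasurableSet.univ_pi fun _ => measurableSet_Ioo
  rw [← lintegral_indicator hms (fun r => Wt β r * g r),
    ← lint_affine σ hc (H := (univ.pi fun _ : Fin n => Ioo (0:ℝ) 1).indicator fun r => Wt β r * g r)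
      (((meas_Wt β).mul hg).indicator hms), ← lintegral_indicator hms]
  refine lintegral_mono fun r => ?_
  by_cases hr : r ∈ (univ.pi fun _ : Fin n => Ioo (0:ℝ) 1)
  swap
  · rw [indicator_of_notMem hr]; exact zero_le
  have hr' : ∀ i, r i ∈ Ioo (0:ℝ) 1 := fun i => hr i (mem_univ i)
  rw [indicator_of_mem hr, indicator_of_mem]
  swap
  · intro i _
    have := hr' (σ i)
    constructor <;> nlinarith [this.1, this.2]
  refine mul_le_mul' ?_ le_rfl
  have h1 : Wt β r = Wt β (fun i => r (σ i)) := by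
    unfold Wt
    rw [Equiv.prod_comp σ (fun i => ENNReal.ofReal (r i)),
      Equiv.prod_comp σ (fun j => ((β + 1) * (1 - |r j| ^ 2) ^ β / Real.pi))]
  rw [h1]
  refine Wt_mono hβ (fun i => (hr' _).1) (fun i => ?_) (fun i => ?_)
  · nlinarith [(hr' (σ i)).2]
  · nlinarith [(hr' (σ i)).2]

/-- the squared modulus, cut off to the polydisc -/
def Sq {n : ℕ} (f : (Fin n → ℂ) → ℂ) : (Fin n → ℂ) → ℝ≥0∞ :=
  (polydisc n).indicator fun z => ‖f z‖ₑ ^ 2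

lemma meas_Sq {n : ℕ} {f : (Fin n → ℂ) → ℂ} (hf : ContinuousOn f (polydisc n)) :
    Measurable (Sq f) := by
  have h1 : (polydisc n).indicator (fun z => ‖f z‖ₑ ^ 2) =
      fun z => ‖(polydisc n).indicator f z‖ₑ ^ 2 := by
    ext z
    by_cases h : z ∈ polydisc n <;> simp [h]
  unfold Sq
  rw [h1]
  have : Measurable ((polydisc n).indicator f) := by
    classical
    have := ContinuousOn.measurable_piecewise (s := polydisc n) (f := f) (g := fun _ => (0:ℂ))
      hf continuousOn_const (isOpen_polydisc n).measurableSet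
    rwa [← piecewise_eq_indicator]
  fun_prop

lemma int_Sq {n : ℕ} {β : ℝ} (f : (Fin n → ℂ) → ℂ) :
    ∫⁻ z, ENNReal.ofReal (‖f z‖ ^ 2) ∂(Vbeta n β) = ∫⁻ z, Sq f z ∂(Vbeta n β) := by
  refine lintegral_congr_ae ?_
  unfold Vbeta
  refine (withDensity_absolutelyContinuous _ _).ae_le ?_
  filter_upwards [ae_restrict_mem (isOpen_polydisc n).measurableSet] with z hz
  unfold Sq
  rw [indicator_of_mem hz, ENNReal.ofReal_pow (norm_nonneg _), ofReal_norm]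

lemma TM_Sq {n : ℕ} (f : (Fin n → ℂ) → ℂ) {s : Fin n → ℝ} (h0 : ∀ i, 0 < s i) (h1 : ∀ i, s i < 1) :
    TM (Sq f) s = ∫⁻ y, ‖f (fun i => (s i : ℂ) * ee (y i))‖ₑ ^ 2 ∂(tm n) := by
  unfold TM
  refine lintegral_congr fun y => ?_
  unfold Sq
  rw [indicator_of_mem]
  intro i
  simp only [norm_mul, norm_ee, mul_one, Complex.norm_real, Real.norm_eq_abs, abs_of_pos (h0 i), h1 i]

lemma rot_V {n : ℕ} {β : ℝ} {ω : Fin n → ℂ} (hω : ∀ i, ‖ω i‖ = 1) {G : (Fin n → ℂ) → ℝ≥0∞}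
    (hG : Measurable G) : ∫⁻ z, G (fun i => ω i * z i) ∂(Vbeta n β) = ∫⁻ z, G z ∂(Vbeta n β) := by
  have hd : Measurable (fun z : Fin n → ℂ =>
    ENNReal.ofReal (∏ j, ((β + 1) * (1 - ‖z j‖ ^ 2) ^ β / Real.pi))) := by fun_prop
  have hp : MeasurePreserving (fun (z : Fin n → ℂ) i => ω i * z i) := by
    refine volume_preserving_pi (f := fun i (w : ℂ) => ω i * w) fun i => ?_
    exact (rotation (⟨ω i, by simp [Submonoid.unitSphere, hω i]⟩ : Circle)).measurePreserving
  unfold Vbeta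
  rw [lintegral_withDensity_eq_lintegral_mul _ hd hG,
    lintegral_withDensity_eq_lintegral_mul _ hd (g := fun z => G (fun i => ω i * z i)) (hG.comp hp.measurable),
    ← lintegral_indicator (isOpen_polydisc n).measurableSet,
    ← lintegral_indicator (isOpen_polydisc n).measurableSet,
    ← hp.lintegral_comp ((hd.mul hG).indicator (isOpen_polydisc n).measurableSet)]
  refine lintegral_congr fun z => ?_
  have : (fun i => ω i * z i) ∈ polydisc n ↔ z ∈ polydisc n := by
    simp [polydisc, hω]
  by_cases h : z ∈ polydisc n
  · rw [indicator_of_mem h, indicator_of_mem (this.2 h)]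
    simp [hω]
  · rw [indicator_of_notMem h, indicator_of_notMem (by rwa [this])]

lemma lintegral_biUnion_le {α ι : Type*} [MeasurableSpace α] {μ : Measure α} (T : Finset ι)
    (U : ι → Set α) (g : α → ℝ≥0∞) :
    ∫⁻ x in ⋃ p ∈ T, U p, g x ∂μ ≤ ∑ p ∈ T, ∫⁻ x in U p, g x ∂μ := by
  classical
  induction T using Finset.induction_on with
  | empty => simp
  | insert a T ha ih =>
    rw [Finset.set_biUnion_insert, Finset.sum_insert ha]
    exact (lintegral_union_le _ _ _).trans (add_le_add le_rfl ih)

lemma exists_lb {n : ℕ} (a : Fin n → ℝ) (ha : ∀ i, 0 < a i) : ∃ δ > 0, ∀ i, δ ≤ a i := by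
  obtain ⟨δ, h, h2⟩ := fin_min (P := fun i x => x ≤ a i) fun i => ⟨a i, ha i, fun x _ h => h⟩
  exact ⟨δ, h, h2 δ h le_rfl⟩

/-- Step 1: increasing the radii. -/
lemma step1 {n : ℕ} {F : (Fin n → ℂ) → ℂ} (hF : DifferentiableOn ℂ F (polydisc n)) {ε : ℝ}
    (hε : 0 < ε) (hε1 : ε ≤ 1 / 2) {r : Fin n → ℝ} (hr : ∀ i, r i ∈ Ioo (0:ℝ) 1) :
    TM (Sq F) r ≤ ALc n (1 / 4) 1 * TM (Sq F) (fun i => 1 - ε * (1 - r i)) := by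
  have hs0 : ∀ i, 1 / 2 ≤ 1 - ε * (1 - r i) := fun i => by nlinarith [(hr i).1, (hr i).2]
  have hs1 : ∀ i, 1 - ε * (1 - r i) < 1 := fun i => by nlinarith [(hr i).1, (hr i).2]
  rw [TM_Sq F (fun i => (hr i).1) (fun i => (hr i).2),
    TM_Sq F (fun i => by linarith [hs0 i]) hs1]
  obtain ⟨δ, hδ, hδ'⟩ := exists_lb (fun i => (1 - ε) * (1 - r i))
    (fun i => mul_pos (by linarith) (by linarith [(hr i).2]))
  have := AL hF (s := fun i => 1 - ε * (1 - r i)) (ω := fun _ => 1) (fun i => by linarith [hs0 i])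
    hs1 (fun i => by simp) (c := 1 / 4) (by norm_num) (by norm_num)
    (U := univ.pi fun _ : Fin n => Ioo (-Real.pi) Real.pi)
    (MeasurableSet.univ_pi fun _ => measurableSet_Ioo) (Ψ := fun θ => θ) continuousOn_id 1
    (fun θ _ θ' _ => by simp) (fun θ hθ i => hθ i (mem_univ i))
    (W := fun θ i => (r i : ℂ) * ee (θ i)) hδ
    (fun θ _ i => by
      rw [norm_mul, norm_ee, mul_one, Complex.norm_real, Real.norm_eq_abs, abs_of_pos (hr i).1]
      have := hδ' i
      linarith)
    (fun θ _ i y => by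
      have := dist_circ (R := r i) (s := 1 - ε * (1 - r i)) (x := θ i) (y := y) (hr i).1.le (hs0 i)
      rw [mul_one]
      linarith)
  rw [← tm_eq] at this
  simpa only [mul_one] using this

/-- Step 2: one patch. -/
lemma step2 {n : ℕ} {Φ : (Fin n → ℂ) → (Fin n → ℂ)} {f : (Fin n → ℂ) → ℂ}
    (hf : DifferentiableOn ℂ f (polydisc n)) {θ₀ : Fin n → ℝ} {ρ c ε : ℝ} {Kc : NNReal}
    {σ : Equiv.Perm (Fin n)} {ω : Fin n → ℂ} (hc : 0 < c) (hc1 : c ≤ 1 / 4) (hρ : ρ ≤ 1 / 2)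
    (hω : ∀ i, ‖ω i‖ = 1)
    (H : ∀ t : Fin n → ℝ, (∀ j, t j ∈ Ioo 0 ρ) →
      ∃ Ψ : (Fin n → ℝ) → (Fin n → ℝ), ContinuousOn Ψ (ball θ₀ ρ) ∧
        (∀ θ ∈ ball θ₀ ρ, ∀ θ' ∈ ball θ₀ ρ, dist θ θ' ≤ Kc * dist (Ψ θ) (Ψ θ')) ∧
        (∀ θ ∈ ball θ₀ ρ, ∀ i, Ψ θ i ∈ Ioo (-Real.pi) Real.pi) ∧
        (∀ θ ∈ ball θ₀ ρ, ∀ i, ‖Φ (fun j => ((1 - t j : ℝ) : ℂ) * ee (θ j)) i‖ ≤ 1 - 2 * c * t (σ i)) ∧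
        (∀ θ ∈ ball θ₀ ρ, ∀ i y, c * ‖ee (Ψ θ i) - ee y‖ ≤
          ‖Φ (fun j => ((1 - t j : ℝ) : ℂ) * ee (θ j)) i - ((1 - c * t (σ i) : ℝ) : ℂ) * ω i * ee y‖))
    (hε : 0 < ε) (hε1 : ε ≤ ρ) {r : Fin n → ℝ} (hr : ∀ i, r i ∈ Ioo (0:ℝ) 1) :
    ∫⁻ θ in ball θ₀ ρ, ‖f (Φ (fun j => ((1 - ε * (1 - r j) : ℝ) : ℂ) * ee (θ j)))‖ₑ ^ 2 ≤
      ALc n c Kc * TM (Sq fun z => f (fun i => ω i * z i))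
        (fun i => 1 - c * ε * (1 - r (σ i))) := by
  obtain ⟨Ψ, h1, h2, h3, h4, h5⟩ := H (fun j => ε * (1 - r j)) (fun j => by
    constructor <;> nlinarith [(hr j).1, (hr j).2])
  have hcε : 0 < c * ε := mul_pos hc hε
  have hcε1 : c * ε ≤ 1 / 4 := by nlinarith
  have hs0 : ∀ i, 0 < 1 - c * ε * (1 - r (σ i)) := fun i => by
    nlinarith [(hr (σ i)).1, (hr (σ i)).2]
  have hs1 : ∀ i, 1 - c * ε * (1 - r (σ i)) < 1 := fun i => by
    nlinarith [(hr (σ i)).1, (hr (σ i)).2]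
  obtain ⟨δ, hδ, hδ'⟩ := exists_lb (fun i => c * ε * (1 - r (σ i)))
    (fun i => mul_pos hcε (by linarith [(hr (σ i)).2]))
  have := AL hf (s := fun i => 1 - c * ε * (1 - r (σ i))) (ω := ω) hs0 hs1 hω hc (by linarith)
    (U := ball θ₀ ρ) measurableSet_ball h1 Kc h2 h3
    (W := fun θ => Φ (fun j => ((1 - ε * (1 - r j) : ℝ) : ℂ) * ee (θ j))) hδ
    (fun θ hθ i => by
      have := h4 θ hθ i
      have := hδ' i
      linarith)
    (fun θ hθ i y => by
      have := h5 θ hθ i y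
      rwa [← mul_assoc] at this)
  rw [TM_Sq _ hs0 hs1]
  refine this.trans (le_of_eq ?_)
  congr 1
  refine lintegral_congr fun y => ?_
  congr 3
  ext i
  ring

theorem main_aux (n : ℕ) (Φ : (Fin n → ℂ) → (Fin n → ℂ))
    (hhol : DifferentiableOn ℂ Φ (polydisc n))
    (hsm : ContDiffOn ℝ 1 Φ (closedPolydisc n))
    (hmap : ∀ z ∈ polydisc n, Φ z ∈ polydisc n)
    (hrank : rankCond n Φ) :
    ∃ C > (0:ℝ), ∀ β ∈ Set.Ioo (-1:ℝ) 0, ∀ f : (Fin n → ℂ) → ℂ,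
      DifferentiableOn ℂ f (polydisc n) →
        ∫⁻ z, ENNReal.ofReal (‖f (Φ z)‖ ^ 2) ∂(Vbeta n β) ≤
          ENNReal.ofReal C * ∫⁻ z, ENNReal.ofReal (‖f z‖ ^ 2) ∂(Vbeta n β) := by
  have hLL := fun θ₀ => LL hhol hsm hmap hrank θ₀
  choose ρ hρ c hc hc1 Kc σ ω hρ1 hω H using hLL
  obtain ⟨T, -, hT⟩ := (isCompact_closedBall (0 : Fin n → ℝ) Real.pi).elim_nhds_subcover
    (fun p => ball p (ρ p)) (fun p _ => ball_mem_nhds p (hρ p))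
  obtain ⟨ε, hε, hε1, hεT⟩ : ∃ ε > 0, ε ≤ (1 / 2 : ℝ) ∧ ∀ p ∈ T, ε ≤ ρ p := by
    clear hT
    classical
    induction T using Finset.induction_on with
    | empty => exact ⟨1 / 2, by norm_num, le_rfl, by simp⟩
    | insert a T _ ih =>
      obtain ⟨ε, h1, h2, h3⟩ := ih
      refine ⟨min ε (ρ a), lt_min h1 (hρ a), (min_le_left _ _).trans h2, fun p hp => ?_⟩
      rcases Finset.mem_insert.1 hp with rfl | hp
      · exact min_le_right _ _
      · exact (min_le_left _ _).trans (h3 p hp)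
  set D : ℝ≥0∞ := ALc n (1 / 4) 1 * ∑ p ∈ T, ALc n (c p) (Kc p) * ENNReal.ofReal ((c p * ε)⁻¹ ^ n)
    with hD
  have hDt : D ≠ ∞ := by
    refine ENNReal.mul_ne_top (ALc_ne_top _ _ _) (ENNReal.sum_ne_top.2 fun p _ => ?_)
    exact ENNReal.mul_ne_top (ALc_ne_top _ _ _) ENNReal.ofReal_ne_top
  refine ⟨D.toReal + 1, by positivity, fun β hβ f hf => ?_⟩
  have hDC : D ≤ ENNReal.ofReal (D.toReal + 1) := by
    rw [← ENNReal.ofReal_toReal hDt]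
    exact ENNReal.ofReal_le_ofReal (by rw [ENNReal.ofReal_toReal hDt]; linarith)
  refine le_trans ?_ (mul_le_mul' hDC le_rfl)
  have hF : DifferentiableOn ℂ (fun z => f (Φ z)) (polydisc n) := hf.comp hhol hmap
  have hfp : ∀ p, DifferentiableOn ℂ (fun z => f (fun i => ω p i * z i)) (polydisc n) := fun p => by
    refine hf.comp (f := fun (z : Fin n → ℂ) i => ω p i * z i) (by fun_prop) ?_
    intro z hz i
    simpa [hω p i] using hz i
  have hfm := meas_Sq hf.continuousOn
  rw [int_Sq, int_Sq, polar_V (meas_Sq hF.continuousOn)]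
  have key : ∀ r ∈ (univ.pi fun _ : Fin n => Ioo (0:ℝ) 1),
      Wt β r * TM (Sq fun z => f (Φ z)) r ≤ ALc n (1 / 4) 1 * ∑ p ∈ T, ALc n (c p) (Kc p) *
        (Wt β r * TM (Sq fun z => f (fun i => ω p i * z i))
          (fun i => 1 - c p * ε * (1 - r (σ p i)))) := by
    intro r hr
    have hr' : ∀ i, r i ∈ Ioo (0:ℝ) 1 := fun i => hr i (mem_univ i)
    have h1 := step1 hF hε hε1 hr'
    have h2 : TM (Sq fun z => f (Φ z)) (fun i => 1 - ε * (1 - r i)) ≤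
        ∑ p ∈ T, ALc n (c p) (Kc p) * TM (Sq fun z => f (fun i => ω p i * z i))
          (fun i => 1 - c p * ε * (1 - r (σ p i))) := by
      rw [TM_Sq _ (fun i => by nlinarith [(hr' i).1, (hr' i).2])
        (fun i => by nlinarith [(hr' i).1, (hr' i).2]), tm_eq]
      have hsub : (univ.pi fun _ : Fin n => Ioo (-Real.pi) Real.pi) ⊆ ⋃ p ∈ T, ball p (ρ p) := by
        refine subset_trans ?_ hT
        intro y hy
        rw [mem_closedBall, dist_pi_le_iff Real.pi_pos.le]
        intro i
        have := hy i (mem_univ i)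
        rw [Pi.zero_apply, Real.dist_eq, sub_zero, abs_le]
        exact ⟨this.1.le, this.2.le⟩
      refine (lintegral_mono_set hsub).trans ?_
      refine (lintegral_biUnion_le T _ _).trans ?_
      exact Finset.sum_le_sum fun p hp => step2 hf (hc p) (hc1 p) (hρ1 p) (hω p) (H p) hε
        (hεT p hp) hr'
    calc Wt β r * TM (Sq fun z => f (Φ z)) r ≤ Wt β r * (ALc n (1 / 4) 1 * _) :=
          mul_le_mul' le_rfl (h1.trans (mul_le_mul' le_rfl h2))
      _ = _ := by
          rw [mul_left_comm, Finset.mul_sum]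
          congr 1
          exact Finset.sum_congr rfl fun p _ => mul_left_comm _ _ _
  have hmp : ∀ p, Measurable fun r : Fin n → ℝ =>
      (Wt β r * TM (Sq fun z => f (fun i => ω p i * z i))
          (fun i => 1 - c p * ε * (1 - r (σ p i)))) := fun p =>
    (meas_Wt β).mul ((meas_TM (meas_Sq (hfp p).continuousOn)).comp (by fun_prop))
  refine (setLIntegral_mono' (MeasurableSet.univ_pi fun _ => measurableSet_Ioo) key).trans ?_
  rw [lintegral_const_mul (f := fun r : Fin n → ℝ => ∑ p ∈ T, ALc n (c p) (Kc p) *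
        (Wt β r * TM (Sq fun z => f (fun i => ω p i * z i))
          (fun i => 1 - c p * ε * (1 - r (σ p i))))) _
      (Finset.measurable_sum _ fun p _ => (hmp p).const_mul _),
    lintegral_finsetSum _ (fun p _ => (hmp p).const_mul _), hD, mul_assoc, Finset.sum_mul]
  refine mul_le_mul' le_rfl (Finset.sum_le_sum fun p hp => ?_)
  rw [lintegral_const_mul (f := fun r : Fin n → ℝ =>
        (Wt β r * TM (Sq fun z => f (fun i => ω p i * z i))
          (fun i => 1 - c p * ε * (1 - r (σ p i))))) _ (hmp p), mul_assoc]
  refine mul_le_mul' le_rfl ?_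
  refine (change_r hβ (σ p) (mul_pos (hc p) hε) (by nlinarith [hc p, hc1 p])
    (meas_TM (meas_Sq (hfp p).continuousOn))).trans ?_
  refine mul_le_mul' le_rfl (le_of_eq ?_)
  rw [← polar_V (meas_Sq (hfp p).continuousOn), ← rot_V (hω p) hfm]
  refine lintegral_congr fun z => ?_
  have : (fun i => ω p i * z i) ∈ polydisc n ↔ z ∈ polydisc n := by
    simp [polydisc, hω]
  by_cases h : z ∈ polydisc n
  · simp only [Sq]
    rw [indicator_of_mem h, indicator_of_mem (this.2 h)]
  · simp only [Sq]
    rw [indicator_of_notMem h, indicator_of_notMem (by rwa [this])]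

theorem rank_sufficiency_uniform_in_beta (n : ℕ) (Φ : (Fin n → ℂ) → (Fin n → ℂ))
    (hhol : DifferentiableOn ℂ Φ (polydisc n))
    (hsm : ContDiffOn ℝ 1 Φ (closedPolydisc n))
    (hmap : ∀ z ∈ polydisc n, Φ z ∈ polydisc n)
    (hrank : rankCond n Φ) :
    ∃ C > (0:ℝ), ∀ β ∈ Set.Ioo (-1:ℝ) 0, ∀ f : (Fin n → ℂ) → ℂ,
      DifferentiableOn ℂ f (polydisc n) →
        ∫⁻ z, ENNReal.ofReal (‖f (Φ z)‖ ^ 2) ∂(Vbeta n β) ≤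
          ENNReal.ofReal C * ∫⁻ z, ENNReal.ofReal (‖f z‖ ^ 2) ∂(Vbeta n β) := by
  exact main_aux n Φ hhol hsm hmap hrank

end
end

section
/- Suppose φ : 𝔻² → 𝔻 is holomorphic and C¹-smooth on the closed bidisc, and there exist z_0 ∈ 𝔻 and ζ ∈ 𝕋 such that |φ(z_0, ζ)| = 1. Then ∂φ/∂z(z, ζ) = 0 for all z ∈ 𝔻, and the function z ↦ ∂φ/∂w(z, ζ) is constant on 𝔻 (here z denotes the first variable and w the second). -/
open MeasureTheory Metric Set ENNReal

noncomputable section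

/-- A holomorphic function on the disc with real values is constant. -/
lemma const_of_real_aux (k : ℂ → ℂ) (hk : DifferentiableOn ℂ k (Metric.ball (0:ℂ) 1))
    (him : ∀ z ∈ Metric.ball (0:ℂ) 1, (k z).im = 0) :
    ∀ z ∈ Metric.ball (0:ℂ) 1, k z = k 0 := by
  have hne : ∀ z ∈ Metric.ball (0:ℂ) 1, k z + Complex.I ≠ 0 := by
    intro z hz h
    have := congrArg Complex.im h
    simp [him z hz] at this
  have hn : ∀ z ∈ Metric.ball (0:ℂ) 1, ‖(k z - Complex.I) / (k z + Complex.I)‖ = 1 := by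
    intro z hz
    rw [norm_div, div_eq_one_iff_eq (norm_ne_zero_iff.2 (hne z hz))]
    simp [Complex.norm_def, Complex.normSq_apply, him z hz]
  have h0 : (0:ℂ) ∈ Metric.ball (0:ℂ) 1 := by simp
  have hc := Complex.eqOn_of_isPreconnected_of_isMaxOn_norm
    (f := fun z => (k z - Complex.I) / (k z + Complex.I))
    (convex_ball (0:ℂ) 1).isPreconnected isOpen_ball
    ((hk.sub_const _).div (hk.add_const _) hne) h0
    (by intro z hz; simp only [Function.comp, Set.mem_ofPred_eq]; rw [hn z hz, hn 0 h0])
  intro z hz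
  have h := hc hz
  simp only [Function.const_apply] at h
  rw [div_eq_div_iff (hne z hz) (hne 0 h0)] at h
  have h2 : 2 * Complex.I * (k z - k 0) = 0 := by linear_combination h
  have := (mul_eq_zero.1 h2).resolve_left (by simp)
  exact sub_eq_zero.1 this

theorem boundary_derivative_constancy (φ : ℂ × ℂ → ℂ)
    (hhol : DifferentiableOn ℂ φ (Metric.ball (0:ℂ) 1 ×ˢ Metric.ball (0:ℂ) 1))
    (hsm : ContDiffOn ℝ 1 φ (Metric.closedBall (0:ℂ) 1 ×ˢ Metric.closedBall (0:ℂ) 1))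
    (hmap : ∀ p ∈ Metric.ball (0:ℂ) 1 ×ˢ Metric.ball (0:ℂ) 1, ‖φ p‖ < 1)
    (z₀ ζ : ℂ) (hz₀ : z₀ ∈ Metric.ball (0:ℂ) 1) (hζ : ‖ζ‖ = 1)
    (hφ : ‖φ (z₀, ζ)‖ = 1) :
    (∀ z ∈ Metric.ball (0:ℂ) 1,
        fderivWithin ℝ φ (Metric.closedBall (0:ℂ) 1 ×ˢ Metric.closedBall (0:ℂ) 1)
          (z, ζ) (1, 0) = 0) ∧
      (∃ c : ℂ, ∀ z ∈ Metric.ball (0:ℂ) 1,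
        fderivWithin ℝ φ (Metric.closedBall (0:ℂ) 1 ×ˢ Metric.closedBall (0:ℂ) 1)
          (z, ζ) (0, 1) = c) := by
  set B : Set (ℂ × ℂ) := Metric.ball (0:ℂ) 1 ×ˢ Metric.ball (0:ℂ) 1 with hB
  set K : Set (ℂ × ℂ) := Metric.closedBall (0:ℂ) 1 ×ˢ Metric.closedBall (0:ℂ) 1 with hK
  have hBo : IsOpen B := isOpen_ball.prod isOpen_ball
  have hBK : B ⊆ K := prod_mono ball_subset_closedBall ball_subset_closedBall
  have hcl : closure B = K := by
    rw [hB, closure_prod_eq, closure_ball _ one_ne_zero]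
  have hud : UniqueDiffOn ℝ K :=
    uniqueDiffOn_convex ((convex_closedBall (0:ℂ) 1).prod (convex_closedBall (0:ℂ) 1))
      ⟨0, interior_maximal hBK hBo (by simp [hB])⟩
  set D := fderivWithin ℝ φ K with hD
  have hDc : ContinuousOn D K := hsm.continuousOn_fderivWithin hud le_rfl
  have hφc : ContinuousOn φ K := hsm.continuousOn
  have hder : ∀ p ∈ K, HasFDerivWithinAt φ (D p) K p := fun p hp =>
    ((hsm.differentiableOn one_ne_zero) p hp).hasFDerivWithinAt
  -- complex linearity
  have hlin : ∀ v : ℂ × ℂ, ∀ p ∈ K, D p (Complex.I • v) = Complex.I • D p v := by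
    intro v
    have h1 : EqOn (fun p => D p (Complex.I • v)) (fun p => Complex.I • D p v) B := by
      intro p hp
      have hd : DifferentiableAt ℂ φ p := (hhol p hp).differentiableAt (hBo.mem_nhds hp)
      have e : D p = fderiv ℝ φ p := fderivWithin_of_mem_nhds
        (Filter.mem_of_superset (hBo.mem_nhds hp) hBK)
      have e2 : fderiv ℝ φ p = (fderiv ℂ φ p).restrictScalars ℝ :=
        (hd.hasFDerivAt.restrictScalars ℝ).fderiv
      simp only [e, e2, ContinuousLinearMap.coe_restrictScalars', map_smul]
    have hDv : ContinuousOn (fun p => D p v) K := hDc.clm_apply continuousOn_const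
    have hDv2 : ContinuousOn (fun p => Complex.I • D p v) K := by fun_prop
    exact h1.of_subset_closure (hDc.clm_apply continuousOn_const)
      hDv2 hBK hcl.ge
  have hlinc : ∀ a : ℂ, ∀ v : ℂ × ℂ, ∀ p ∈ K, D p (a • v) = a • D p v := by
    intro a v p hp
    have e : a • v = a.re • v + a.im • (Complex.I • v) := by
      conv_lhs => rw [← Complex.re_add_im a, add_smul, mul_smul]
      simp only [Complex.coe_smul]
    rw [e, map_add, map_smul, map_smul, hlin v p hp]
    conv_rhs => rw [← Complex.re_add_im a, add_smul, mul_smul]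
    simp only [Complex.coe_smul]
  have hle : ∀ p ∈ K, ‖φ p‖ ≤ 1 := by
    intro p hp
    rw [← hcl] at hp
    exact le_on_closure (fun q hq => (hmap q hq).le) (by rw [hcl]; exact hφc.norm)
      continuousOn_const hp
  have hmemK : ∀ z ∈ Metric.ball (0:ℂ) 1, ∀ w : ℂ, ‖w‖ ≤ 1 → (z, w) ∈ K := by
    intro z hz w hw
    exact ⟨ball_subset_closedBall hz, by simpa using hw⟩
  have hfd : ∀ w : ℂ, ‖w‖ ≤ 1 → ∀ z ∈ Metric.ball (0:ℂ) 1,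
      HasFDerivAt (fun z => φ (z, w)) ((D (z, w)).comp (ContinuousLinearMap.inl ℝ ℂ ℂ)) z := by
    intro w hw z hz
    have h1 : HasFDerivAt (fun z : ℂ => (z, w)) (ContinuousLinearMap.inl ℝ ℂ ℂ) z :=
      hasFDerivAt_prodMk_left z w
    have h2 := (hder _ (hmemK z hz w hw)).comp z (h1.hasFDerivWithinAt (s := Metric.ball 0 1))
      (fun y hy => hmemK y hy w hw)
    exact h2.hasFDerivAt (isOpen_ball.mem_nhds hz)
  have hholw : ∀ w : ℂ, ‖w‖ ≤ 1 →
      DifferentiableOn ℂ (fun z => φ (z, w)) (Metric.ball (0:ℂ) 1) := by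
    intro w hw z hz
    apply DifferentiableAt.differentiableWithinAt
    rw [differentiableAt_complex_iff_differentiableAt_real]
    have h := hfd w hw z hz
    refine ⟨h.differentiableAt, ?_⟩
    rw [h.fderiv]
    have := hlin (1, 0) _ (hmemK z hz w hw)
    simpa using this
  have hconst : ∀ z ∈ Metric.ball (0:ℂ) 1, φ (z, ζ) = φ (z₀, ζ) := by
    have := Complex.eqOn_of_isPreconnected_of_isMaxOn_norm
      (convex_ball (0:ℂ) 1).isPreconnected isOpen_ball (hholw ζ hζ.le) hz₀
      (by intro z hz; simp only [Function.comp, Set.mem_ofPred_eq, hφ]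
          exact hle _ (hmemK z hz ζ hζ.le))
    exact this
  refine ⟨?_, ?_⟩
  · intro z hz
    have h := hfd ζ hζ.le z hz
    have h2 : HasFDerivAt (fun z => φ (z, ζ)) (0 : ℂ →L[ℝ] ℂ) z :=
      (hasFDerivAt_const (φ (z₀, ζ)) z).congr_of_eventuallyEq
        (Filter.eventuallyEq_of_mem (isOpen_ball.mem_nhds hz) hconst)
    have := DFunLike.congr_fun (h.unique h2) 1
    simpa using this
  set c := φ (z₀, ζ) with hc
  have hζ0 : ζ ≠ 0 := by rw [← norm_ne_zero_iff, hζ]; exact one_ne_zero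
  have hc0 : c ≠ 0 := by rw [← norm_ne_zero_iff, hφ]; exact one_ne_zero
  -- derivative along curves in the second variable
  have hcurve : ∀ z ∈ Metric.ball (0:ℂ) 1, ∀ (γ : ℝ → ℂ) (γ' : ℂ) (t : ℝ) (s : Set ℝ),
      HasDerivWithinAt γ γ' s t → (∀ u ∈ s, ‖γ u‖ ≤ 1) → t ∈ s →
      HasDerivWithinAt (fun u => φ (z, γ u)) (γ' * D (z, γ t) (0, 1)) s t := by
    intro z hz γ γ' t s hγ hs ht
    have h1 : HasDerivWithinAt (fun u => (z, γ u)) (0, γ') s t :=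
      (hasDerivWithinAt_const t s z).prodMk hγ
    have hm := hmemK z hz _ (hs t ht)
    have h2 := (hder _ hm).comp_hasDerivWithinAt t h1 (fun u hu => hmemK z hz _ (hs u hu))
    have h3 := hlinc γ' (0, 1) _ hm
    simp only [Prod.smul_mk, smul_eq_mul, mul_zero, mul_one] at h3
    rw [← h3]
    exact h2
  -- reality
  have hreal : ∀ z ∈ Metric.ball (0:ℂ) 1, (ζ * D (z, ζ) (0, 1) / c).im = 0 := by
    intro z hz
    have hγ : HasDerivAt (fun t : ℝ => ζ * Complex.exp (t * Complex.I)) (ζ * Complex.I) 0 := by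
      have h := ((Complex.ofRealCLM.hasDerivAt (x := 0)).mul_const Complex.I).cexp.const_mul ζ
      simpa using h
    have h := hcurve z hz _ _ 0 univ hγ.hasDerivWithinAt
      (by intro u _; simp [hζ, Complex.norm_exp_ofReal_mul_I]) (mem_univ _)
    rw [hasDerivWithinAt_univ] at h
    have h2 := h.div_const c
    have h3 : HasDerivAt (fun t : ℝ => (φ (z, ζ * Complex.exp (t * Complex.I)) / c).re) _ 0 :=
      Complex.reCLM.hasFDerivAt.comp_hasDerivAt (0:ℝ) h2
    have hmax : IsLocalMax (fun t : ℝ => (φ (z, ζ * Complex.exp (t * Complex.I)) / c).re) 0 := by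
      refine Filter.Eventually.of_forall fun t => ?_
      have e : φ (z, ζ * Complex.exp ((0:ℝ) * Complex.I)) / c = 1 := by
        simp [hconst z hz, hc0]
      beta_reduce
      rw [e]
      refine (Complex.re_le_norm _).trans ?_
      rw [norm_div, hφ, div_one]
      exact hle _ (hmemK z hz _ (by simp [hζ, Complex.norm_exp_ofReal_mul_I]))
    have h4 := hmax.hasDerivAt_eq_zero h3
    have e : ζ * Complex.I * D (z, ζ) (0, 1) / c = Complex.I * (ζ * D (z, ζ) (0, 1) / c) := by ring
    simp only [Complex.ofReal_zero, zero_mul, Complex.exp_zero, mul_one, e] at h4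
    simpa using h4
  -- holomorphy
  have hg : DifferentiableOn ℂ (fun z => ζ * D (z, ζ) (0, 1)) (Metric.ball (0:ℂ) 1) := by
    have hlim : TendstoLocallyUniformlyOn
        (fun (r : ℝ) z => (c - φ (z, r * ζ)) / ((1 - r : ℝ) : ℂ))
        (fun z => ζ * D (z, ζ) (0, 1)) (nhdsWithin 1 (Iio 1)) (Metric.ball (0:ℂ) 1) := by
      apply TendstoUniformlyOn.tendstoLocallyUniformlyOn
      rw [Metric.tendstoUniformlyOn_iff]
      intro ε hε
      have hKc : IsCompact K := (isCompact_closedBall _ _).prod (isCompact_closedBall _ _)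
      have huc := hKc.uniformContinuousOn_of_continuous
        (hDc.clm_apply (continuousOn_const (c := ((0:ℂ), (1:ℂ)))))
      rw [Metric.uniformContinuousOn_iff] at huc
      obtain ⟨δ, hδ, hδ'⟩ := huc (ε / 2) (by positivity)
      have hev : Ioo (max 0 (1 - δ)) 1 ∈ nhdsWithin (1:ℝ) (Iio 1) :=
        Ioo_mem_nhdsLT (by simp [hδ])
      filter_upwards [hev] with r hr z hz
      obtain ⟨hr1, hr2⟩ := hr
      obtain ⟨hr0, hrδ⟩ := max_lt_iff.1 hr1
      have hn : ∀ u ∈ Icc r 1, ‖(u:ℂ) * ζ‖ ≤ 1 := by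
        intro u hu
        rw [norm_mul, hζ, mul_one, Complex.norm_real, Real.norm_eq_abs,
          abs_of_nonneg (hr0.le.trans hu.1)]
        exact hu.2
      have hmv := (convex_Icc r 1).norm_image_sub_le_of_norm_hasDerivWithin_le
        (f := fun u : ℝ => φ (z, u * ζ) - u * (ζ * D (z, ζ) (0, 1)))
        (f' := fun u : ℝ => ζ * D (z, u * ζ) (0, 1) - ζ * D (z, ζ) (0, 1)) (C := ε / 2)
        (x := r) (y := 1)
        (by
          intro u hu
          have a1 : HasDerivWithinAt (fun u : ℝ => (u:ℂ) * ζ) ζ (Icc r 1) u := by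
            simpa using (Complex.ofRealCLM.hasDerivWithinAt (s := Icc r 1) (x := u)).mul_const ζ
          have a2 := hcurve z hz _ _ u _ a1 hn hu
          have a3 : HasDerivWithinAt (fun u : ℝ => (u:ℂ) * (ζ * D (z, ζ) (0, 1)))
              (ζ * D (z, ζ) (0, 1)) (Icc r 1) u := by
            simpa using (Complex.ofRealCLM.hasDerivWithinAt (s := Icc r 1) (x := u)).mul_const
              (ζ * D (z, ζ) (0, 1))
          exact a2.sub a3)
        (by
          intro u hu
          rw [← mul_sub, norm_mul, hζ, one_mul, ← dist_eq_norm]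
          refine (hδ' _ (hmemK z hz _ (hn u hu)) _ (hmemK z hz ζ hζ.le) ?_).le
          rw [Prod.dist_eq]
          have : dist ((u:ℂ) * ζ) ζ = 1 - u := by
            rw [dist_eq_norm, ← sub_one_mul, norm_mul, hζ, mul_one, ← Complex.ofReal_one,
              ← Complex.ofReal_sub, Complex.norm_real, Real.norm_eq_abs, abs_sub_comm,
              abs_of_nonneg (by linarith [hu.2])]
          simp only [dist_self, this]
          exact max_lt hδ (by linarith [hu.1]))
        ⟨le_rfl, hr2.le⟩ ⟨hr2.le, le_rfl⟩
      have hpos : 0 < 1 - r := by linarith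
      have hne : ((1 - r : ℝ) : ℂ) ≠ 0 := by exact_mod_cast hpos.ne'
      simp only [Complex.ofReal_one, one_mul, hconst z hz] at hmv
      rw [dist_comm, dist_eq_norm]
      have e : (c - φ (z, r * ζ)) / ((1 - r : ℝ) : ℂ) - ζ * D (z, ζ) (0, 1) =
          (c - ζ * D (z, ζ) (0, 1) - (φ (z, r * ζ) - r * (ζ * D (z, ζ) (0, 1))))
            / ((1 - r : ℝ) : ℂ) := by
        rw [eq_div_iff hne, sub_mul, div_mul_cancel₀ _ hne]
        push_cast
        ring
      have hnr : ‖(1:ℝ) - r‖ = 1 - r := by rw [Real.norm_eq_abs, abs_of_pos hpos]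
      rw [e, norm_div, Complex.norm_real, hnr, div_lt_iff₀ hpos]
      rw [hnr] at hmv
      refine hmv.trans_lt ?_
      have := mul_pos hε hpos
      linarith
    refine hlim.differentiableOn ?_ isOpen_ball
    have hev : Ioo (0:ℝ) 1 ∈ nhdsWithin (1:ℝ) (Iio 1) := Ioo_mem_nhdsLT one_pos
    filter_upwards [hev] with r hr
    refine ((differentiableOn_const c).sub (hholw (r * ζ) ?_)).div_const _
    rw [norm_mul, hζ, mul_one, Complex.norm_real, Real.norm_eq_abs, abs_of_pos hr.1]
    exact hr.2.le
  refine ⟨D (0, ζ) (0, 1), fun z hz => ?_⟩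
  have h := const_of_real_aux _ (hg.div_const c) hreal z hz
  have h1 := (div_left_inj' hc0).1 h
  exact mul_left_cancel₀ hζ0 h1

end
end

section
/- There exists a constant C > 0 such that for every β ∈ (-1, 0], every a ∈ ℂ, and every δ ∈ (0,1): A_β(D(a, δ) ∩ 𝔻) ≤ C·δ^{β+2}, where D(a,δ) = {z ∈ ℂ : |z - a| < δ} and A_β is the measure (β+1)(1-|z|²)^β dA(z) on 𝔻. The constant C is independent of δ, β, and a. -/
open MeasureTheory Metric Set ENNReal

noncomputable section

/-- The weighted measure `A_β` on the unit disc: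
`dA_β(z) = (β+1)(1-|z|²)^β dA(z)` where `dA` is normalized area measure. -/
def Abeta (β : ℝ) : Measure ℂ :=
  (volume.restrict (Metric.ball (0:ℂ) 1)).withDensity
    (fun z => ENNReal.ofReal ((β + 1) * (1 - ‖z‖ ^ 2) ^ β / Real.pi))

lemma aux_zero (β δ : ℝ) (hβ : -1 < β) (hδ : 0 < δ) :
    ∫⁻ t in Icc 0 δ, ENNReal.ofReal (t ^ β) = ENNReal.ofReal (δ ^ (β + 1) / (β + 1)) := by
  have hi : IntervalIntegrable (fun t : ℝ => t ^ β) volume 0 δ :=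
    intervalIntegral.intervalIntegrable_rpow' hβ
  rw [intervalIntegrable_iff_integrableOn_Icc_of_le hδ.le] at hi
  rw [← ofReal_integral_eq_lintegral_ofReal hi]
  · rw [integral_Icc_eq_integral_Ioc, ← intervalIntegral.integral_of_le hδ.le,
      integral_rpow (Or.inl hβ), Real.zero_rpow (by linarith), sub_zero]
  · filter_upwards [ae_restrict_mem measurableSet_Icc] with t ht
    exact Real.rpow_nonneg ht.1 _

lemma aux_one (β δ u c : ℝ) (hβ : -1 < β) (hβ0 : β ≤ 0) (hδ : 0 < δ) :
    ∫⁻ x in Ioo (u - δ) (u + δ), ENNReal.ofReal (|x - c| ^ β)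
      ≤ ENNReal.ofReal (4 * δ ^ (β + 1) / (β + 1)) := by
  set G : ℝ → ℝ≥0∞ := (Icc 0 δ).indicator (fun t => ENNReal.ofReal (t ^ β)) with hG
  have hGm : Measurable G := by
    apply Measurable.indicator _ measurableSet_Icc
    fun_prop
  have hGi : ∫⁻ t, G t = ENNReal.ofReal (δ ^ (β + 1) / (β + 1)) := by
    rw [hG, lintegral_indicator measurableSet_Icc, aux_zero β δ hβ hδ]
  have hpt : ∀ x : ℝ, ENNReal.ofReal (|x - c| ^ β)
      ≤ ENNReal.ofReal (δ ^ β) + (G (x - c) + G (c - x)) := by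
    intro x
    rcases le_total δ |x - c| with h | h
    · refine le_trans (ENNReal.ofReal_le_ofReal ?_) le_self_add
      exact Real.rpow_le_rpow_of_nonpos hδ h hβ0
    · refine le_trans ?_ le_add_self
      rcases le_total 0 (x - c) with h0 | h0
      · rw [abs_of_nonneg h0] at h ⊢
        refine le_trans ?_ le_self_add
        rw [hG, indicator_of_mem (show x - c ∈ Icc 0 δ from ⟨h0, h⟩)]
      · rw [abs_of_nonpos h0, neg_sub] at h ⊢
        refine le_trans ?_ le_add_self
        rw [hG, indicator_of_mem (show c - x ∈ Icc 0 δ from ⟨by linarith, h⟩)]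
  calc _ ≤ ∫⁻ x in Ioo (u - δ) (u + δ), (ENNReal.ofReal (δ ^ β) + (G (x - c) + G (c - x))) :=
        lintegral_mono hpt
    _ = (∫⁻ x in Ioo (u - δ) (u + δ), ENNReal.ofReal (δ ^ β))
        + ((∫⁻ x in Ioo (u - δ) (u + δ), G (x - c)) + ∫⁻ x in Ioo (u - δ) (u + δ), G (c - x)) := by
        rw [lintegral_add_left measurable_const, lintegral_add_left (by fun_prop)]
    _ ≤ ENNReal.ofReal (δ ^ β) * ENNReal.ofReal (2 * δ)
        + ((∫⁻ x, G (x - c)) + ∫⁻ x, G (c - x)) := by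
        gcongr
        · rw [setLIntegral_const, Real.volume_Ioo]
          gcongr
          linarith
        · exact Measure.restrict_le_self
        · exact Measure.restrict_le_self
    _ ≤ _ := by
        have hb : 0 < β + 1 := by linarith
        have hp : 0 < δ ^ (β + 1) := Real.rpow_pos_of_pos hδ _
        rw [lintegral_sub_right_eq_self G c, lintegral_sub_left_eq_self G c, hGi,
          ← ENNReal.ofReal_add (by positivity) (by positivity),
          ← ENNReal.ofReal_mul (by positivity),
          ← ENNReal.ofReal_add (by positivity) (by positivity)]
        apply ENNReal.ofReal_le_ofReal
        have e : δ ^ β * (2 * δ) = 2 * δ ^ (β + 1) := by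
          rw [Real.rpow_add hδ, Real.rpow_one]; ring
        rw [e, le_div_iff₀ hb]
        field_simp
        nlinarith

lemma aux_two (β δ u v : ℝ) (c : ℝ → ℝ) (hc : Measurable c)
    (hβ : -1 < β) (hβ0 : β ≤ 0) (hδ : 0 < δ) :
    ∫⁻ p in Ioo (u - δ) (u + δ) ×ˢ Ioo (v - δ) (v + δ), ENNReal.ofReal (|p.1 - c p.2| ^ β)
      ≤ ENNReal.ofReal (8 * δ ^ (β + 2) / (β + 1)) := by
  have hb : 0 < β + 1 := by linarith
  have hp : 0 < δ ^ (β + 1) := Real.rpow_pos_of_pos hδ _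
  rw [Measure.volume_eq_prod, ← Measure.prod_restrict, lintegral_prod_symm _ (by fun_prop)]
  refine (lintegral_mono (fun y => aux_one β δ u (c y) hβ hβ0 hδ)).trans ?_
  rw [setLIntegral_const, Real.volume_Ioo, ← ENNReal.ofReal_mul (by positivity)]
  apply ENNReal.ofReal_le_ofReal
  rw [show β + 2 = (β + 1) + 1 by ring, Real.rpow_add hδ (β + 1), Real.rpow_one]
  apply le_of_eq
  ring

lemma aux_two' (β δ u v : ℝ) (c : ℝ → ℝ) (hc : Measurable c)
    (hβ : -1 < β) (hβ0 : β ≤ 0) (hδ : 0 < δ) :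
    ∫⁻ p in Ioo (u - δ) (u + δ) ×ˢ Ioo (v - δ) (v + δ), ENNReal.ofReal (|p.2 - c p.1| ^ β)
      ≤ ENNReal.ofReal (8 * δ ^ (β + 2) / (β + 1)) := by
  have hb : 0 < β + 1 := by linarith
  have hp : 0 < δ ^ (β + 1) := Real.rpow_pos_of_pos hδ _
  rw [Measure.volume_eq_prod, ← Measure.prod_restrict, lintegral_prod _ (by fun_prop)]
  refine (lintegral_mono (fun y => aux_one β δ v (c y) hβ hβ0 hδ)).trans ?_
  rw [setLIntegral_const, Real.volume_Ioo, ← ENNReal.ofReal_mul (by positivity)]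
  apply ENNReal.ofReal_le_ofReal
  rw [show β + 2 = (β + 1) + 1 by ring, Real.rpow_add hδ (β + 1), Real.rpow_one]
  apply le_of_eq
  ring

lemma aux_pt1 (β x y : ℝ) (hβ0 : β ≤ 0) (h : x ^ 2 + y ^ 2 < 1)
    (hx : 1 / 4 ≤ x ^ 2) :
    (1 - (x ^ 2 + y ^ 2)) ^ β ≤ |x - √(1 - y ^ 2)| ^ β + |x - -√(1 - y ^ 2)| ^ β := by
  set s := √(1 - y ^ 2) with hs
  have hs0 : 0 ≤ s := Real.sqrt_nonneg _
  have hs2 : s ^ 2 = 1 - y ^ 2 := Real.sq_sqrt (by nlinarith)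
  have hlt : |x| < s := abs_lt_of_sq_lt_sq (by linarith) hs0
  have hhalf : 1 / 2 ≤ |x| := by
    have := sq_abs x
    have := abs_nonneg x
    nlinarith
  have h1 := Real.rpow_nonneg (abs_nonneg (x - s)) β
  have h2 := Real.rpow_nonneg (abs_nonneg (x - -s)) β
  have hle : s - |x| ≤ 1 - (x ^ 2 + y ^ 2) := by
    have : 1 - (x ^ 2 + y ^ 2) = (s - |x|) * (s + |x|) := by
      have := sq_abs x
      nlinarith
    rw [this]
    nlinarith
  have key := Real.rpow_le_rpow_of_nonpos (sub_pos.2 hlt) hle hβ0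
  rcases le_total 0 x with h0 | h0
  · rw [abs_of_nonneg h0] at key hlt
    have : |x - s| = s - x := by rw [abs_sub_comm, abs_of_pos (by linarith)]
    rw [this] at h1 ⊢
    linarith
  · rw [abs_of_nonpos h0] at key hlt
    have : |x - -s| = s - -x := by rw [abs_of_pos (by linarith)]; ring
    rw [this] at h2 ⊢
    linarith

lemma aux_pt (β x y : ℝ) (hβ : -1 < β) (hβ0 : β ≤ 0) (h : x ^ 2 + y ^ 2 < 1) :
    (1 - (x ^ 2 + y ^ 2)) ^ β ≤ 2 + ((|x - √(1 - y ^ 2)| ^ β + |x - -√(1 - y ^ 2)| ^ β) +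
      (|y - √(1 - x ^ 2)| ^ β + |y - -√(1 - x ^ 2)| ^ β)) := by
  have h1 := Real.rpow_nonneg (abs_nonneg (x - √(1 - y ^ 2))) β
  have h2 := Real.rpow_nonneg (abs_nonneg (x - -√(1 - y ^ 2))) β
  have h3 := Real.rpow_nonneg (abs_nonneg (y - √(1 - x ^ 2))) β
  have h4 := Real.rpow_nonneg (abs_nonneg (y - -√(1 - x ^ 2))) β
  by_cases hx : 1 / 4 ≤ x ^ 2
  · linarith [aux_pt1 β x y hβ0 h hx]
  by_cases hy : 1 / 4 ≤ y ^ 2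
  · have := aux_pt1 β y x hβ0 (by linarith) hy
    rw [add_comm (y ^ 2)] at this
    linarith
  have a1 := Real.rpow_le_rpow_of_nonpos (x := 1 / 2) (y := 1 - (x ^ 2 + y ^ 2))
    (by norm_num) (by linarith) hβ0
  have a2 : (1 / 2 : ℝ) ^ β ≤ (1 / 2 : ℝ) ^ (-1 : ℝ) :=
    Real.rpow_le_rpow_of_exponent_ge (by norm_num) (by norm_num) hβ.le
  have a3 : (1 / 2 : ℝ) ^ (-1 : ℝ) = 2 := by rw [Real.rpow_neg_one]; norm_num
  linarith

theorem disc_intersection_measure_bound :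
    ∃ C > (0:ℝ), ∀ β ∈ Set.Ioc (-1:ℝ) 0, ∀ a : ℂ, ∀ δ ∈ Set.Ioo (0:ℝ) 1,
      Abeta β (Metric.ball a δ ∩ Metric.ball 0 1) ≤ ENNReal.ofReal (C * δ ^ (β + 2)) := by
  refine ⟨40, by norm_num, ?_⟩
  rintro β ⟨hβ, hβ0⟩ a δ ⟨hδ, hδ1⟩
  have hb : 0 < β + 1 := by linarith
  set R : Set (ℝ × ℝ) := Ioo (a.re - δ) (a.re + δ) ×ˢ Ioo (a.im - δ) (a.im + δ) with hR
  have hRm : MeasurableSet R := measurableSet_Ioo.prod measurableSet_Ioo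
  set F : ℝ × ℝ → ℝ≥0∞ := fun p => ENNReal.ofReal 2 +
    ((ENNReal.ofReal (|p.1 - √(1 - p.2 ^ 2)| ^ β) +
      ENNReal.ofReal (|p.1 - -√(1 - p.2 ^ 2)| ^ β)) +
    (ENNReal.ofReal (|p.2 - √(1 - p.1 ^ 2)| ^ β) +
      ENNReal.ofReal (|p.2 - -√(1 - p.1 ^ 2)| ^ β))) with hF
  have hFm : Measurable F := by fun_prop
  have hδp : 0 < δ ^ (β + 2) := Real.rpow_pos_of_pos hδ _
  have hFi : ∫⁻ p in R, F p ≤ ENNReal.ofReal (40 * δ ^ (β + 2) / (β + 1)) := by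
    have t1 := aux_two β δ a.re a.im (fun y => √(1 - y ^ 2)) (by fun_prop) hβ hβ0 hδ
    have t2 := aux_two β δ a.re a.im (fun y => -√(1 - y ^ 2)) (by fun_prop) hβ hβ0 hδ
    have t3 := aux_two' β δ a.re a.im (fun y => √(1 - y ^ 2)) (by fun_prop) hβ hβ0 hδ
    have t4 := aux_two' β δ a.re a.im (fun y => -√(1 - y ^ 2)) (by fun_prop) hβ hβ0 hδ
    have t0 : ∫⁻ p in R, ENNReal.ofReal 2 ≤ ENNReal.ofReal (8 * δ ^ (β + 2) / (β + 1)) := by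
      rw [setLIntegral_const, hR, Measure.volume_eq_prod, Measure.prod_prod, Real.volume_Ioo,
        Real.volume_Ioo, ← ENNReal.ofReal_mul (by linarith), ← ENNReal.ofReal_mul (by norm_num)]
      apply ENNReal.ofReal_le_ofReal
      have : δ ^ (2 : ℝ) ≤ δ ^ (β + 2) :=
        Real.rpow_le_rpow_of_exponent_ge hδ hδ1.le (by linarith)
      rw [Real.rpow_two] at this
      rw [le_div_iff₀ hb]
      nlinarith [sq_nonneg δ]
    rw [hF, lintegral_add_left (by fun_prop), lintegral_add_left (by fun_prop),
      lintegral_add_left (by fun_prop), lintegral_add_left (by fun_prop)]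
    refine (add_le_add t0 (add_le_add (add_le_add t1 t2) (add_le_add t3 t4))).trans ?_
    have hq : 0 ≤ 8 * δ ^ (β + 2) / (β + 1) := by positivity
    rw [← ENNReal.ofReal_add hq hq, ← ENNReal.ofReal_add (by positivity) (by positivity),
      ← ENNReal.ofReal_add hq (by positivity)]
    apply ENNReal.ofReal_le_ofReal
    apply le_of_eq
    ring
  have hSm : MeasurableSet (Metric.ball a δ ∩ Metric.ball (0 : ℂ) 1) :=
    measurableSet_ball.inter measurableSet_ball
  have hmp := Complex.volume_preserving_equiv_real_prod
  rw [Abeta, withDensity_apply _ hSm, Measure.restrict_restrict hSm,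
    inter_assoc, inter_self]
  calc _ ≤ ∫⁻ z in Metric.ball a δ ∩ Metric.ball (0 : ℂ) 1,
        ENNReal.ofReal (β + 1) * F (Complex.measurableEquivRealProd z) := by
        refine setLIntegral_mono' hSm ?_
        rintro z ⟨-, hz⟩
        have hz1 : ‖z‖ < 1 := by simpa using hz
        have hn : ‖z‖ ^ 2 = z.re ^ 2 + z.im ^ 2 := by
          rw [Complex.sq_norm, Complex.normSq_apply]; ring
        have hlt : z.re ^ 2 + z.im ^ 2 < 1 := by
          rw [← hn]; nlinarith [norm_nonneg z]
        have := aux_pt β z.re z.im hβ hβ0 hlt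
        have hFz : F (Complex.measurableEquivRealProd z) = ENNReal.ofReal
          (2 + ((|z.re - √(1 - z.im ^ 2)| ^ β + |z.re - -√(1 - z.im ^ 2)| ^ β) +
          (|z.im - √(1 - z.re ^ 2)| ^ β + |z.im - -√(1 - z.re ^ 2)| ^ β))) := by
          rw [ENNReal.ofReal_add (by positivity) (by positivity),
            ENNReal.ofReal_add (by positivity) (by positivity),
            ENNReal.ofReal_add (by positivity) (by positivity),
            ENNReal.ofReal_add (by positivity) (by positivity)]
          rfl
        rw [hFz, ← ENNReal.ofReal_mul hb.le, hn]
        apply ENNReal.ofReal_le_ofReal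
        have hpos : 0 ≤ (β + 1) * (1 - (z.re ^ 2 + z.im ^ 2)) ^ β :=
          mul_nonneg hb.le (Real.rpow_nonneg (by linarith) _)
        refine (div_le_self hpos (by linarith [Real.pi_gt_three])).trans ?_
        gcongr
    _ ≤ ∫⁻ z in Complex.measurableEquivRealProd ⁻¹' R,
        ENNReal.ofReal (β + 1) * F (Complex.measurableEquivRealProd z) := by
        apply lintegral_mono_set
        rintro z ⟨hz, -⟩
        rw [Metric.mem_ball, dist_eq_norm] at hz
        have h1 := abs_lt.1 ((Complex.abs_re_le_norm (z - a)).trans_lt hz)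
        have h2 := abs_lt.1 ((Complex.abs_im_le_norm (z - a)).trans_lt hz)
        rw [Complex.sub_re] at h1
        rw [Complex.sub_im] at h2
        show (z.re ∈ Ioo _ _) ∧ (z.im ∈ Ioo _ _)
        refine ⟨⟨?_, ?_⟩, ⟨?_, ?_⟩⟩ <;> linarith
    _ = ∫⁻ p in R, ENNReal.ofReal (β + 1) * F p :=
        hmp.setLIntegral_comp_preimage (f := fun p => ENNReal.ofReal (β + 1) * F p) hRm
          (hFm.const_mul _)
    _ = ENNReal.ofReal (β + 1) * ∫⁻ p in R, F p := lintegral_const_mul _ hFm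
    _ ≤ ENNReal.ofReal (β + 1) * ENNReal.ofReal (40 * δ ^ (β + 2) / (β + 1)) := by gcongr
    _ = _ := by
        rw [← ENNReal.ofReal_mul hb.le]
        congr 1
        field_simp

end
end
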